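/- arXiv:2010.01448 — 2 statements merged into one kernel-verified Lean document; each statement's English description precedes it below -/
import Mathlib

section
/- Let N ≥ 1, p ∈ (2,∞), κ ∈ (0,1), s > 0, and suppose that 1/p > 1/2 - s/N, κ ≥ 1/2, and 1 - κ ≤ ((N+1)/2)(1/2 - 1/p). Then for every fixed R > 0 the constrained supremum sup{ Q_κ(u) : u ∈ H^s(ℝ^N) \ {0} and ‖(|D|^s - 1)u‖_{L²} ≤ R·‖u‖_{L²} } is finite. -/
open MeasureTheory Filter Topology SchwartzMap

noncomputable section

abbrev Esp (N : ℕ) := EuclideanSpace ℝ (Fin N)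

/-- An element of the Sobolev space `H^s(ℝ^N, ℂ)`: an `L²` function `u` together with (a
representative of) its distributional Fourier transform `hat`, satisfying
`(1+|ξ|²)^{s/2}·hat ∈ L²`. The relation between `u` and `hat` is expressed by duality
against Schwartz functions (the multiplication formula `∫ u · 𝓕φ = ∫ û · φ`). -/
structure Hs (N : ℕ) (s : ℝ) where
  u : Esp N → ℂ
  hat : Esp N → ℂ
  u_mem : MemLp u 2 (volume : Measure (Esp N))
  hat_mem : MemLp (fun ξ => (((1 + ‖ξ‖ ^ 2) ^ (s / 2) : ℝ) : ℂ) * hat ξ) 2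
    (volume : Measure (Esp N))
  fourier_spec : ∀ φ : SchwartzMap (Esp N) ℂ,
    ∫ x, u x * (FourierTransform.fourierCLE ℂ (SchwartzMap (Esp N) ℂ) φ) x = ∫ ξ, hat ξ * φ ξ

/-- `u` does not vanish almost everywhere. -/
def Hs.Nontriv {N : ℕ} {s : ℝ} (U : Hs N s) : Prop :=
  ¬ (U.u =ᵐ[(volume : Measure (Esp N))] 0)

/-- `‖(|D|^s - 1) u‖_{L²}`: by Plancherel this is the `L²` norm of `(|ξ|^s - 1)·û`. -/
def dNorm {N : ℕ} {s : ℝ} (U : Hs N s) : ENNReal :=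
  eLpNorm (fun ξ => ((‖ξ‖ ^ s - 1 : ℝ) : ℂ) * U.hat ξ) 2 (volume : Measure (Esp N))

/-- The quotient `Q_κ(u) = ‖u‖_{L^p} / (‖u‖_{L²}^κ ‖(|D|^s - 1)u‖_{L²}^{1-κ})`,
computed in `[0,∞]`. -/
def Qquot {N : ℕ} {s : ℝ} (p κ : ℝ) (U : Hs N s) : ENNReal :=
  eLpNorm U.u (ENNReal.ofReal p) (volume : Measure (Esp N)) /
    (eLpNorm U.u 2 (volume : Measure (Esp N)) ^ κ * dNorm U ^ (1 - κ))

section part1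

open scoped FourierTransform ENNReal NNReal

lemma fourier_toLp_of_spec {N : ℕ} {f F : Esp N → ℂ} (hf : MemLp f 2 (volume : Measure (Esp N)))
    (hF : MemLp F 2 (volume : Measure (Esp N)))
    (h : ∀ φ : SchwartzMap (Esp N) ℂ,
      ∫ x, f x * (FourierTransform.fourierCLE ℂ (SchwartzMap (Esp N) ℂ) φ) x = ∫ ξ, F ξ * φ ξ) :
    𝓕 (hf.toLp f) = hF.toLp F := by
  have key := LinearMap.ker_eq_bot.1
    (MeasureTheory.Lp.ker_toTemperedDistributionCLM_eq_bot (E := Esp N) (F := ℂ)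
      (μ := volume) (p := 2))
  apply key
  show ((𝓕 (hf.toLp f) : Lp ℂ 2 (volume : Measure (Esp N))) : 𝓢'(Esp N, ℂ)) = ((hF.toLp F : Lp ℂ 2 (volume : Measure (Esp N))) : 𝓢'(Esp N, ℂ))
  rw [← MeasureTheory.Lp.fourier_toTemperedDistribution_eq]
  ext φ
  rw [TemperedDistribution.fourier_apply, Lp.toTemperedDistribution_apply, Lp.toTemperedDistribution_apply]
  have e1 : ∫ x, (𝓕 φ) x • (hf.toLp f : Lp ℂ 2 (volume : Measure (Esp N))) x
      = ∫ x, f x * (FourierTransform.fourierCLE ℂ (SchwartzMap (Esp N) ℂ) φ) x := by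
    apply integral_congr_ae
    filter_upwards [hf.coeFn_toLp] with x hx
    rw [hx, smul_eq_mul, mul_comm]; rfl
  have e2 : ∫ x, φ x • (hF.toLp F : Lp ℂ 2 (volume : Measure (Esp N))) x = ∫ x, F x * φ x := by
    apply integral_congr_ae
    filter_upwards [hF.coeFn_toLp] with x hx
    rw [hx, smul_eq_mul, mul_comm]
  rw [e1, e2, h]

lemma integral_fourier_mul {N : ℕ} {f g : Esp N → ℂ} (hf : Integrable f) (hg : Integrable g) :
    ∫ ξ, 𝓕 f ξ * g ξ = ∫ x, f x * 𝓕 g x := by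
  have := VectorFourier.integral_fourierIntegral_smul_eq_flip (L := innerₗ (Esp N))
    (μ := volume) (ν := volume) Real.continuous_fourierChar continuous_inner hf hg
  simpa using! this

lemma fourier_L1_L2 {N : ℕ} {f : Esp N → ℂ} (hf1 : Integrable f)
    (hf : MemLp f 2 (volume : Measure (Esp N))) :
    MemLp (𝓕 f) 2 (volume : Measure (Esp N)) ∧
      eLpNorm (𝓕 f) 2 (volume : Measure (Esp N)) = eLpNorm f 2 volume ∧
      ((𝓕 (hf.toLp f) : Lp ℂ 2 (volume : Measure (Esp N))) : Esp N → ℂ) =ᵐ[volume] 𝓕 f := by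
  set G : Lp ℂ 2 (volume : Measure (Esp N)) := 𝓕 (hf.toLp f) with hG
  have hGm : MemLp G 2 volume := Lp.memLp G
  have hc : Continuous (𝓕 f) := by
    simpa using! VectorFourier.fourierIntegral_continuous (L := innerₗ (Esp N)) Real.continuous_fourierChar continuous_inner hf1
  have hae : (G : Esp N → ℂ) =ᵐ[volume] 𝓕 f := by
    apply ae_eq_of_integral_contDiff_smul_eq (hGm.locallyIntegrable (by norm_num)) hc.locallyIntegrable
    intro g hg1 hg2
    have h2' : HasCompactSupport (fun x => (g x : ℂ)) := hg2.comp_left (g := fun t : ℝ => (t : ℂ)) (by simp)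
    set φ : SchwartzMap (Esp N) ℂ := h2'.toSchwartzMap (Complex.ofRealCLM.contDiff.comp hg1) with hφ
    have hφx : ∀ x, φ x = (g x : ℂ) := fun x => rfl
    have h3 := congrArg (fun T : 𝓢'(Esp N, ℂ) => T φ) (MeasureTheory.Lp.fourier_toTemperedDistribution_eq (hf.toLp f))
    simp only [TemperedDistribution.fourier_apply, Lp.toTemperedDistribution_apply] at h3
    have h4 : ∫ x, g x • (G : Esp N → ℂ) x = ∫ x, φ x • (G : Esp N → ℂ) x := by
      apply integral_congr_ae
      filter_upwards with x
      rw [hφx, smul_eq_mul, Complex.real_smul]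
    rw [h4, ← h3]
    have h5 : ∫ x, (𝓕 φ) x • (hf.toLp f : Lp ℂ 2 (volume : Measure (Esp N))) x = ∫ x, f x * 𝓕 (φ : Esp N → ℂ) x := by
      apply integral_congr_ae
      filter_upwards [hf.coeFn_toLp] with x hx
      rw [hx, smul_eq_mul, mul_comm, SchwartzMap.fourier_coe]
    rw [h5, ← integral_fourier_mul hf1 φ.integrable]
    apply integral_congr_ae
    filter_upwards with x
    rw [hφx, Complex.real_smul, mul_comm]
  refine ⟨(memLp_congr_ae hae).1 hGm, ?_, hae⟩
  rw [← eLpNorm_congr_ae hae]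
  have h6 : ‖G‖ = ‖hf.toLp f‖ := MeasureTheory.Lp.norm_fourier_eq _
  rw [Lp.norm_def, Lp.norm_toLp] at h6
  exact (ENNReal.toReal_eq_toReal_iff' hGm.eLpNorm_ne_top hf.eLpNorm_ne_top).1 h6

/-- Pairing formula. -/
lemma pairing {N : ℕ} {u v g : Esp N → ℂ} (hu : MemLp u 2 (volume : Measure (Esp N)))
    (hv : MemLp v 2 (volume : Measure (Esp N)))
    (h : ∀ φ : SchwartzMap (Esp N) ℂ,
      ∫ x, u x * (FourierTransform.fourierCLE ℂ (SchwartzMap (Esp N) ℂ) φ) x = ∫ ξ, v ξ * φ ξ)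
    (hg1 : Integrable g) (hg : MemLp g 2 (volume : Measure (Esp N))) :
    ∫ x, u x * starRingEnd ℂ (g x) = ∫ ξ, v ξ * starRingEnd ℂ (𝓕 g ξ) := by
  have h1 := MeasureTheory.Lp.inner_fourier_eq (hg.toLp g) (hu.toLp u)
  rw [fourier_toLp_of_spec hu hv h, L2.inner_def, L2.inner_def] at h1
  have e1 : ∫ x, u x * starRingEnd ℂ (g x) = ∫ x, inner ℂ ((hg.toLp g : Lp ℂ 2 (volume : Measure (Esp N))) x) ((hu.toLp u : Lp ℂ 2 (volume : Measure (Esp N))) x) := by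
    apply integral_congr_ae
    filter_upwards [hg.coeFn_toLp, hu.coeFn_toLp] with x h1 h2
    rw [h1, h2]; rfl
  rw [e1, ← h1]
  apply integral_congr_ae
  filter_upwards [(fourier_L1_L2 hg1 hg).2.2, hv.coeFn_toLp] with x h1 h2
  rw [h1, h2]; rfl

end part1

section part2

open scoped FourierTransform ENNReal NNReal

lemma holo_int {α : Type*} [MeasurableSpace α] {μ : Measure α} {U : Set ℂ} (hU : IsOpen U)
    {F : ℂ → α → ℂ} {bound : α → ℝ} (hb : Integrable bound μ)
    (hm : ∀ z ∈ U, AEStronglyMeasurable (F z) μ)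
    (hle : ∀ᵐ a ∂μ, ∀ z ∈ U, ‖F z a‖ ≤ bound a)
    (hd : ∀ᵐ a ∂μ, DifferentiableOn ℂ (fun z => F z a) U) :
    DifferentiableOn ℂ (fun z => ∫ a, F z a ∂μ) U := by
  intro z0 hz0
  obtain ⟨ε, hε, hball⟩ := Metric.nhds_basis_closedBall.mem_iff.1 (hU.mem_nhds hz0)
  have hε2 : 0 < ε / 2 := by positivity
  have hsub : ∀ z ∈ Metric.ball z0 (ε / 2), Metric.closedBall z (ε / 2) ⊆ U := by
    intro z hz w hw
    apply hball
    rw [Metric.mem_closedBall] at *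
    rw [Metric.mem_ball] at hz
    calc dist w z0 ≤ dist w z + dist z z0 := dist_triangle _ _ _
      _ ≤ ε := by linarith
  have hin : ∀ z ∈ Metric.ball z0 (ε / 2), z ∈ U := fun z hz =>
    hsub z hz (Metric.mem_closedBall_self hε2.le)
  have hmeas' : AEStronglyMeasurable (fun a => deriv (fun z => F z a) z0) μ := by
    let zn : ℕ → ℂ := fun n => z0 + ((ε / (n + 1) : ℝ) : ℂ)
    have hznU : ∀ n, zn n ∈ U := by
      intro n
      apply hball
      rw [Metric.mem_closedBall, dist_eq_norm]
      simp only [zn, add_sub_cancel_left, Complex.norm_real, Real.norm_eq_abs]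
      rw [abs_of_pos (by positivity)]
      apply div_le_self hε.le
      have : (0 : ℝ) ≤ n := Nat.cast_nonneg n
      linarith
    have hzlim : Tendsto zn atTop (𝓝[≠] z0) := by
      apply tendsto_nhdsWithin_iff.2 ⟨?_, ?_⟩
      · have h1 : Tendsto (fun n : ℕ => ε / ((n : ℝ) + 1)) atTop (𝓝 0) :=
          by
            have := (tendsto_one_div_add_atTop_nhds_zero_nat (𝕜 := ℝ)).const_mul ε
            simpa [div_eq_mul_inv] using this
        have h2 : Tendsto (fun n : ℕ => z0 + ((ε / ((n : ℝ) + 1) : ℝ) : ℂ)) atTop (𝓝 (z0 + ((0 : ℝ) : ℂ))) :=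
          tendsto_const_nhds.add ((Complex.continuous_ofReal.tendsto 0).comp h1)
        simpa [zn] using h2
      · filter_upwards with n
        have hne : ε / ((n : ℝ) + 1) ≠ 0 := by positivity
        simp only [zn, Set.mem_compl_iff, Set.mem_singleton_iff, add_eq_left]
        exact_mod_cast hne
    refine aestronglyMeasurable_of_tendsto_ae atTop (f := fun n a => slope (fun z => F z a) z0 (zn n)) ?_ ?_
    · intro n
      simp only [slope_def_module]
      exact ((hm _ (hznU n)).sub (hm _ hz0)).const_smul ((zn n - z0)⁻¹)
    · filter_upwards [hd] with a ha
      have h1 : HasDerivAt (fun z => F z a) (deriv (fun z => F z a) z0) z0 :=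
        (ha.differentiableAt (hU.mem_nhds hz0)).hasDerivAt
      exact h1.tendsto_slope.comp hzlim
  have key := hasDerivAt_integral_of_dominated_loc_of_deriv_le (𝕜 := ℂ) (μ := μ) (F := F) (x₀ := z0)
    (s := Metric.ball z0 (ε / 2)) (bound := fun a => bound a / (ε / 2))
    (F' := fun z a => deriv (fun z => F z a) z)
    (Metric.ball_mem_nhds _ hε2) (by
      filter_upwards [hU.mem_nhds hz0] with z hz using hm z hz)
    (hb.mono' (hm z0 hz0) (by filter_upwards [hle] with a ha using ha z0 hz0))
    hmeas' (by
      filter_upwards [hle, hd] with a ha hda z hz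
      apply Complex.norm_deriv_le_of_forall_mem_sphere_norm_le hε2
      · apply DifferentiableOn.diffContOnCl
        rw [closure_ball _ hε2.ne']
        exact hda.mono (hsub z hz)
      · intro w hw
        exact ha w (hsub z hz (Metric.sphere_subset_closedBall hw)))
    (hb.div_const _) (by
      filter_upwards [hd] with a ha z hz
      exact (ha.differentiableAt (hU.mem_nhds (hin z hz))).hasDerivAt)
  exact key.2.differentiableAt.differentiableWithinAt

lemma continuous_fourier' {N : ℕ} {f : Esp N → ℂ} (hf1 : Integrable f) : Continuous (𝓕 f) := by
  simpa using! VectorFourier.fourierIntegral_continuous (L := innerₗ (Esp N)) Real.continuous_fourierChar continuous_inner hf1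

lemma norm_fourier_le' {N : ℕ} (f : Esp N → ℂ) (ξ : Esp N) : ‖𝓕 f ξ‖ ≤ ∫ x, ‖f x‖ :=
  VectorFourier.norm_fourierIntegral_le_integral_norm _ _ _ _ _

lemma bil_L1 {N : ℕ} {m F G : Esp N → ℂ} {M : ℝ} (hm : Integrable m) (hM : ∀ x, ‖𝓕 m x‖ ≤ M)
    (hF : Integrable F) (hG : Integrable G) :
    ‖∫ ξ, m ξ * (𝓕 F ξ * 𝓕 G ξ)‖ ≤ M * ((∫ x, ‖F x‖) * ∫ x, ‖G x‖) := by
  have gen : ∀ {m' F' : Esp N → ℂ} {K : ℝ}, Integrable m' → Integrable F' → (∀ x, ‖𝓕 m' x‖ ≤ K) →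
      ‖∫ ξ, 𝓕 F' ξ * m' ξ‖ ≤ K * ∫ x, ‖F' x‖ := by
    intro m' F' K h1 h2 h3
    rw [integral_fourier_mul h2 h1]
    calc ‖∫ x, F' x * 𝓕 m' x‖ ≤ ∫ x, ‖F' x‖ * K := by
          apply norm_integral_le_of_norm_le (h2.norm.mul_const _)
          filter_upwards with x
          rw [norm_mul]
          exact mul_le_mul_of_nonneg_left (h3 x) (norm_nonneg _)
      _ = K * ∫ x, ‖F' x‖ := by rw [integral_mul_const, mul_comm]
  have hmF : Integrable (fun ξ => m ξ * 𝓕 F ξ) := by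
    refine Integrable.mul_bdd (c := ∫ x, ‖F x‖) hm (continuous_fourier' hF).aestronglyMeasurable ?_
    filter_upwards with ξ using norm_fourier_le' F ξ
  have h1 : ∀ x, ‖𝓕 (fun ξ => m ξ * 𝓕 F ξ) x‖ ≤ M * ∫ x, ‖F x‖ := by
    intro x
    have e1 : 𝓕 (fun ξ => m ξ * 𝓕 F ξ) x
        = ∫ ξ, 𝓕 F ξ * ((Real.fourierChar (-(inner ℝ ξ x)) : ℂ) * m ξ) := by
      rw [Real.fourier_eq]
      congr 1
      ext ξ
      rw [Circle.smul_def, smul_eq_mul]; ring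
    rw [e1]
    apply gen _ hF
    · intro y
      have e2 : 𝓕 (fun ξ => (Real.fourierChar (-(inner ℝ ξ x)) : ℂ) * m ξ) y = 𝓕 m (x + y) := by
        rw [Real.fourier_eq, Real.fourier_eq]
        congr 1
        ext ξ
        rw [Circle.smul_def, Circle.smul_def, smul_eq_mul, smul_eq_mul, ← mul_assoc, ← Circle.coe_mul,
          ← AddChar.map_add_eq_mul, inner_add_right]
        congr 3
        ring
      rw [e2]; exact hM _
    · refine Integrable.bdd_mul (c := 1) hm ?_ ?_
      · apply Continuous.aestronglyMeasurable
        fun_prop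
      · filter_upwards with ξ
        exact le_of_eq (Circle.norm_coe _)
  have e3 : ∫ ξ, m ξ * (𝓕 F ξ * 𝓕 G ξ) = ∫ ξ, 𝓕 G ξ * (m ξ * 𝓕 F ξ) := by
    congr 1; ext ξ; ring
  rw [e3]
  refine (gen hmF hG h1).trans (le_of_eq (by ring))

lemma bil_L2 {N : ℕ} {m F G : Esp N → ℂ} {M : ℝ} (hM : ∀ x, ‖m x‖ ≤ M)
    (hF : Integrable F) (hG : Integrable G) (hF2 : MemLp F 2 (volume : Measure (Esp N)))
    (hG2 : MemLp G 2 (volume : Measure (Esp N))) :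
    ‖∫ ξ, m ξ * (𝓕 F ξ * 𝓕 G ξ)‖
      ≤ M * ((∫ x, ‖F x‖ ^ (2 : ℝ)) ^ (1 / 2 : ℝ) * (∫ x, ‖G x‖ ^ (2 : ℝ)) ^ (1 / 2 : ℝ)) := by
  obtain ⟨mF, eF, -⟩ := fourier_L1_L2 hF hF2
  obtain ⟨mG, eG, -⟩ := fourier_L1_L2 hG hG2
  have M0 : 0 ≤ M := (norm_nonneg _).trans (hM 0)
  have key : ∀ {A : Esp N → ℂ}, MemLp A 2 (volume : Measure (Esp N)) →
      (∫ x, ‖A x‖ ^ (2 : ℝ)) ^ (1 / 2 : ℝ) = (eLpNorm A 2 volume).toReal := by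
    intro A hA
    rw [hA.eLpNorm_eq_integral_rpow_norm (by norm_num) (by norm_num)]
    rw [ENNReal.toReal_ofReal (by positivity)]
    norm_num
  rw [key hF2, key hG2, ← eF, ← eG, ← key mF, ← key mG]
  have h2 : Integrable (fun ξ => ‖𝓕 F ξ‖ * ‖𝓕 G ξ‖) := by
    have := MemLp.integrable_mul mF.norm mG.norm
    exact this
  calc ‖∫ ξ, m ξ * (𝓕 F ξ * 𝓕 G ξ)‖ ≤ ∫ ξ, M * (‖𝓕 F ξ‖ * ‖𝓕 G ξ‖) := by
        apply norm_integral_le_of_norm_le (h2.const_mul _)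
        filter_upwards with x
        rw [norm_mul, norm_mul]
        exact mul_le_mul_of_nonneg_right (hM x) (by positivity)
    _ = M * ∫ ξ, ‖𝓕 F ξ‖ * ‖𝓕 G ξ‖ := integral_const_mul _ _
    _ ≤ _ := by
        apply mul_le_mul_of_nonneg_left _ M0
        apply integral_mul_norm_le_Lp_mul_Lq Real.HolderConjugate.two_two
        · simpa using mF
        · simpa using mG

end part2

section part3

open scoped FourierTransform ENNReal NNReal

def phi (q : ℝ) (z c : ℂ) : ℂ :=
  if c = 0 then 0 else (c / ‖c‖) * Complex.exp (((q : ℂ) * (1 + z) / 2) * (Real.log ‖c‖ : ℝ))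

lemma phi_zero (q : ℝ) (z : ℂ) : phi q z 0 = 0 := by simp [phi]

lemma norm_phi {q : ℝ} (hq : 0 < q) {z : ℂ} (hz : 0 ≤ z.re) (c : ℂ) :
    ‖phi q z c‖ = ‖c‖ ^ (q * (1 + z.re) / 2) := by
  by_cases hc : c = 0
  · subst hc
    rw [phi_zero, norm_zero, Real.zero_rpow (by positivity)]
  · have hc' : 0 < ‖c‖ := norm_pos_iff.2 hc
    rw [phi, if_neg hc, norm_mul, norm_div, Complex.norm_real, norm_norm, div_self hc'.ne', one_mul,
      Complex.norm_exp, Real.rpow_def_of_pos hc']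
    congr 1
    have : ((q : ℂ) * (1 + z) / 2) * (Real.log ‖c‖ : ℝ) = ((q / 2 * Real.log ‖c‖ : ℝ) : ℂ) * (1 + z) := by
      push_cast; ring
    rw [this, Complex.re_ofReal_mul]
    simp; ring

lemma phi_self {q θ : ℝ} (h : q * (1 + θ) / 2 = 1) (c : ℂ) : phi q (θ : ℂ) c = c := by
  by_cases hc : c = 0
  · subst hc; exact phi_zero _ _
  · have hc' : 0 < ‖c‖ := norm_pos_iff.2 hc
    have h' : (q : ℂ) * (1 + (θ : ℂ)) / 2 = 1 := by exact_mod_cast h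
    rw [phi, if_neg hc, h', one_mul, ← Complex.ofReal_exp, Real.exp_log hc']
    have : ((‖c‖ : ℝ) : ℂ) ≠ 0 := by exact_mod_cast hc'.ne'
    field_simp

lemma phi_diff (q : ℝ) (c : ℂ) : Differentiable ℂ (fun z => phi q z c) := by
  by_cases hc : c = 0
  · simp [phi, hc]
  · simp only [phi, if_neg hc]
    fun_prop

lemma norm_phi_le {q : ℝ} (hq : 0 < q) {z : ℂ} (hz : 0 ≤ z.re) (hz1 : z.re ≤ 1) {c : ℂ} (hc : c ≠ 0) :
    ‖phi q z c‖ ≤ Real.exp (q * |Real.log ‖c‖|) := by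
  have hc' : 0 < ‖c‖ := norm_pos_iff.2 hc
  rw [norm_phi hq hz, Real.rpow_def_of_pos hc']
  apply Real.exp_le_exp.2
  calc Real.log ‖c‖ * (q * (1 + z.re) / 2) ≤ |Real.log ‖c‖| * (q * (1 + z.re) / 2) := by
        gcongr; exact le_abs_self _
    _ ≤ |Real.log ‖c‖| * q := by gcongr; nlinarith
    _ = _ := mul_comm _ _

/-- Indicator of a level set. -/
def lev {N : ℕ} (f : SimpleFunc (Esp N) ℂ) (c : ℂ) : Esp N → ℂ := (f ⁻¹' {c}).indicator (fun _ => 1)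

lemma lev_int {N : ℕ} {f : SimpleFunc (Esp N) ℂ} (hf : Integrable f) {c : ℂ} (hc : c ≠ 0) :
    Integrable (lev f c) ∧ MemLp (lev f c) 2 (volume : Measure (Esp N)) := by
  have h := SimpleFunc.integrable_iff.1 hf c hc
  have hm : MeasurableSet (f ⁻¹' {c}) := f.measurableSet_fiber c
  constructor
  · exact (integrable_indicator_iff hm).2 (integrableOn_const (C := (1 : ℂ)) h.ne)
  · exact memLp_indicator_const 2 hm 1 (Or.inr h.ne)

lemma map_phi_eq {N : ℕ} (f : SimpleFunc (Esp N) ℂ) (q : ℝ) (z : ℂ) (x : Esp N) :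
    phi q z (f x) = ∑ c ∈ f.range.filter (· ≠ 0), phi q z c * lev f c x := by
  by_cases h : f x = 0
  · rw [h, phi_zero]
    symm
    apply Finset.sum_eq_zero
    intro c hc
    have hc0 := (Finset.mem_filter.1 hc).2
    have : x ∉ f ⁻¹' {c} := by
      simp only [Set.mem_preimage, Set.mem_singleton_iff, h]; exact fun h => hc0 h.symm
    rw [lev, Set.indicator_of_notMem this, mul_zero]
  · rw [Finset.sum_eq_single (f x)]
    · have : x ∈ f ⁻¹' {f x} := by simp
      rw [lev, Set.indicator_of_mem this, mul_one]
    · intro c _ hc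
      have : x ∉ f ⁻¹' {c} := by
        simp only [Set.mem_preimage, Set.mem_singleton_iff]; exact fun h => hc h.symm
      rw [lev, Set.indicator_of_notMem this, mul_zero]
    · intro hx
      exfalso; apply hx
      rw [Finset.mem_filter]
      exact ⟨f.mem_range_self x, h⟩

lemma fourier_map_phi {N : ℕ} {f : SimpleFunc (Esp N) ℂ} (hf : Integrable f) (q : ℝ) (z : ℂ) (ξ : Esp N) :
    𝓕 (fun x => phi q z (f x)) ξ = ∑ c ∈ f.range.filter (· ≠ 0), phi q z c * 𝓕 (lev f c) ξ := by
  simp only [map_phi_eq]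
  rw [Real.fourier_eq]
  simp only [Finset.smul_sum]
  rw [integral_finsetSum]
  · apply Finset.sum_congr rfl
    intro c hc
    rw [Real.fourier_eq, ← integral_const_mul]
    congr 1; ext x
    simp only [Circle.smul_def, smul_eq_mul]; ring
  · intro c hc
    have := (lev_int hf (Finset.mem_filter.1 hc).2).1.const_mul (phi q z c)
    exact (Real.fourierIntegral_convergent_iff ξ).2 this

lemma map_phi_int {N : ℕ} {f : SimpleFunc (Esp N) ℂ} (hf : Integrable f) (q : ℝ) (z : ℂ) :
    Integrable (fun x => phi q z (f x)) ∧
      MemLp (fun x => phi q z (f x)) 2 (volume : Measure (Esp N)) := by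
  simp only [map_phi_eq]
  constructor
  · apply integrable_finsetSum
    intro c hc
    exact (lev_int hf (Finset.mem_filter.1 hc).2).1.const_mul (phi q z c)
  · apply memLp_finsetSum
    intro c hc
    exact (lev_int hf (Finset.mem_filter.1 hc).2).2.const_mul (phi q z c)

open Complex.HadamardThreeLines in
lemma stein {N : ℕ} {θ q M Bd : ℝ} (hθ0 : 0 < θ) (hθ1 : θ < 1) (hq0 : 0 < q) (hq : q * (1 + θ) / 2 = 1)
    {m : ℂ → Esp N → ℂ}
    (hm : ∀ z ∈ verticalClosedStrip 0 1, AEStronglyMeasurable (m z) volume)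
    (hd : ∀ ξ, ∀ z ∈ verticalClosedStrip 0 1, DifferentiableAt ℂ (fun z => m z ξ) z)
    (hB : ∀ z ∈ verticalClosedStrip 0 1, ∀ ξ, ‖m z ξ‖ ≤ Bd)
    (h0 : ∀ z : ℂ, z.re = 0 → ∀ ξ, ‖m z ξ‖ ≤ M)
    (h1 : ∀ z : ℂ, z.re = 1 → Integrable (m z) ∧ ∀ x, ‖𝓕 (m z) x‖ ≤ M)
    {f h : SimpleFunc (Esp N) ℂ} (hf : Integrable f) (hh : Integrable h) :
    ‖∫ ξ, m θ ξ * (𝓕 (⇑f) ξ * 𝓕 (⇑h) ξ)‖ ≤ M * ((∫ x, ‖f x‖ ^ q) * ∫ x, ‖h x‖ ^ q) ^ (1 / q) := by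
  have hM0 : 0 ≤ M := (norm_nonneg _).trans (h0 0 (by simp) 0)
  set Φ : ℂ → ℂ := fun z => ∑ c ∈ f.range.filter (· ≠ 0), ∑ d ∈ h.range.filter (· ≠ 0),
    (phi q z c * phi q z d) * ∫ ξ, m z ξ * (𝓕 (lev f c) ξ * 𝓕 (lev h d) ξ) with hΦ
  have hkint : ∀ c ∈ f.range.filter (· ≠ 0), ∀ d ∈ h.range.filter (· ≠ 0),
      Integrable (fun ξ => 𝓕 (lev f c) ξ * 𝓕 (lev h d) ξ) := by
    intro c hc d hd
    obtain ⟨a1, a2⟩ := lev_int hf (Finset.mem_filter.1 hc).2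
    obtain ⟨b1, b2⟩ := lev_int hh (Finset.mem_filter.1 hd).2
    exact MemLp.integrable_mul (fourier_L1_L2 a1 a2).1 (fourier_L1_L2 b1 b2).1
  have hkint2 : ∀ z ∈ verticalClosedStrip 0 1, ∀ c ∈ f.range.filter (· ≠ 0), ∀ d ∈ h.range.filter (· ≠ 0),
      Integrable (fun ξ => m z ξ * (𝓕 (lev f c) ξ * 𝓕 (lev h d) ξ)) := by
    intro z hz c hc d hd
    refine Integrable.bdd_mul (c := Bd) (hkint c hc d hd) (hm z hz) ?_
    filter_upwards with ξ using hB z hz ξ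
  have hΦeq : ∀ z ∈ verticalClosedStrip 0 1, Φ z =
      ∫ ξ, m z ξ * (𝓕 (fun x => phi q z (f x)) ξ * 𝓕 (fun x => phi q z (h x)) ξ) := by
    intro z hz
    simp only [fourier_map_phi hf, fourier_map_phi hh, hΦ]
    simp only [Finset.sum_mul_sum]
    simp only [Finset.mul_sum]
    rw [integral_finsetSum]
    · apply Finset.sum_congr rfl
      intro c hc
      rw [integral_finsetSum]
      · apply Finset.sum_congr rfl
        intro d hd
        rw [← integral_const_mul]
        congr 1; ext ξ; ring
      · intro d hd
        refine ((hkint2 z hz c hc d hd).const_mul (phi q z c * phi q z d)).congr ?_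
        filter_upwards with ξ; ring
    · intro c hc
      apply integrable_finsetSum
      intro d hd
      refine ((hkint2 z hz c hc d hd).const_mul (phi q z c * phi q z d)).congr ?_
      filter_upwards with ξ; ring
  have hopen : IsOpen (verticalStrip 0 1) := isOpen_Ioo.preimage Complex.continuous_re
  have hsub : verticalStrip 0 1 ⊆ verticalClosedStrip 0 1 := Set.preimage_mono Set.Ioo_subset_Icc_self
  have hcl : closure (verticalStrip 0 1) = verticalClosedStrip 0 1 := by
    rw [verticalStrip, verticalClosedStrip, ← closure_Ioo zero_ne_one, ← Complex.closure_preimage_re]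
  have hdiff : DiffContOnCl ℂ Φ (verticalStrip 0 1) := by
    refine ⟨?_, ?_⟩
    · refine DifferentiableOn.fun_sum (fun c hc => DifferentiableOn.fun_sum (fun d hd' => ?_))
      apply DifferentiableOn.mul
      · exact ((phi_diff q c).mul (phi_diff q d)).differentiableOn
      · refine holo_int hopen (bound := fun ξ => Bd * ‖𝓕 (lev f c) ξ * 𝓕 (lev h d) ξ‖)
          ((hkint c hc d hd').norm.const_mul _) ?_ ?_ ?_
        · intro z hz
          exact (hkint2 z (hsub hz) c hc d hd').aestronglyMeasurable
        · filter_upwards with ξ z hz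
          rw [norm_mul]
          exact mul_le_mul_of_nonneg_right (hB z (hsub hz) ξ) (norm_nonneg _)
        · filter_upwards with ξ z hz
          exact ((hd ξ z (hsub hz)).mul_const _).differentiableWithinAt
    · rw [hcl]
      refine continuousOn_finsetSum _ (fun c hc => continuousOn_finsetSum _ (fun d hd' => ?_))
      apply ContinuousOn.mul
      · exact ((phi_diff q c).mul (phi_diff q d)).continuous.continuousOn
      · refine continuousOn_of_dominated (bound := fun ξ => Bd * ‖𝓕 (lev f c) ξ * 𝓕 (lev h d) ξ‖) ?_ ?_ ((hkint c hc d hd').norm.const_mul _) ?_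
        · intro z hz
          exact (hkint2 z hz c hc d hd').aestronglyMeasurable
        · intro z hz
          filter_upwards with ξ
          rw [norm_mul]
          exact mul_le_mul_of_nonneg_right (hB z hz ξ) (norm_nonneg _)
        · filter_upwards with ξ z hz
          exact ((hd ξ z hz).mul_const _).continuousAt.continuousWithinAt
  have hbdd : BddAbove ((norm ∘ Φ) '' verticalClosedStrip 0 1) := by
    refine ⟨∑ c ∈ f.range.filter (· ≠ 0), ∑ d ∈ h.range.filter (· ≠ 0),
      (Real.exp (q * |Real.log ‖c‖|) * Real.exp (q * |Real.log ‖d‖|)) * ∫ ξ, Bd * ‖𝓕 (lev f c) ξ * 𝓕 (lev h d) ξ‖, ?_⟩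
    rintro _ ⟨z, hz, rfl⟩
    refine norm_sum_le_of_le _ (fun c hc => norm_sum_le_of_le _ (fun d hd' => ?_))
    have hz' := hz
    rw [verticalClosedStrip, Set.mem_preimage, Set.mem_Icc] at hz'
    rw [norm_mul, norm_mul]
    gcongr
    · exact norm_phi_le hq0 hz'.1 hz'.2 (Finset.mem_filter.1 hc).2
    · exact norm_phi_le hq0 hz'.1 hz'.2 (Finset.mem_filter.1 hd').2
    · apply norm_integral_le_of_norm_le ((hkint c hc d hd').norm.const_mul _)
      filter_upwards with ξ
      rw [norm_mul]
      exact mul_le_mul_of_nonneg_right (hB z hz ξ) (norm_nonneg _)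
  set A := ∫ x, ‖f x‖ ^ q with hA
  set B := ∫ x, ‖h x‖ ^ q with hBdef
  have hA0 : 0 ≤ A := integral_nonneg (fun x => by positivity)
  have hB0 : 0 ≤ B := integral_nonneg (fun x => by positivity)
  have ha : ∀ z ∈ Complex.re ⁻¹' {0}, ‖Φ z‖ ≤ M * (A ^ (1 / 2 : ℝ) * B ^ (1 / 2 : ℝ)) := by
    intro z hz
    have hz0 : z.re = 0 := hz
    have hzc : z ∈ verticalClosedStrip 0 1 := by simp [verticalClosedStrip, hz0]
    rw [hΦeq z hzc]
    refine (bil_L2 (h0 z hz0) (map_phi_int hf q z).1 (map_phi_int hh q z).1 (map_phi_int hf q z).2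
      (map_phi_int hh q z).2).trans (le_of_eq ?_)
    have e : ∀ c : ℂ, ‖phi q z c‖ ^ (2 : ℝ) = ‖c‖ ^ q := by
      intro c
      rw [norm_phi hq0 hz0.ge, ← Real.rpow_mul (norm_nonneg _), hz0]
      congr 1; ring
    simp only [e, hA, hBdef]
  have hb : ∀ z ∈ Complex.re ⁻¹' {1}, ‖Φ z‖ ≤ M * (A * B) := by
    intro z hz
    have hz0 : z.re = 1 := hz
    have hzc : z ∈ verticalClosedStrip 0 1 := by simp [verticalClosedStrip, hz0]
    rw [hΦeq z hzc]
    refine (bil_L1 (h1 z hz0).1 (h1 z hz0).2 (map_phi_int hf q z).1 (map_phi_int hh q z).1).trans (le_of_eq ?_)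
    have e : ∀ c : ℂ, ‖phi q z c‖ = ‖c‖ ^ q := by
      intro c
      rw [norm_phi hq0 (by rw [hz0]; norm_num), hz0]
      congr 1; ring
    simp only [e, hA, hBdef]
  have hθc : (θ : ℂ) ∈ verticalClosedStrip 0 1 := by
    simp [verticalClosedStrip, hθ0.le, hθ1.le]
  have key := norm_le_interp_of_mem_verticalClosedStrip₀₁' Φ hθc hdiff hbdd ha hb
  rw [hΦeq _ hθc] at key
  simp only [phi_self hq, Complex.ofReal_re] at key
  refine key.trans (le_of_eq ?_)
  have e1 : 1 / q = (1 + θ) / 2 := by field_simp; linarith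
  rw [← Real.mul_rpow hA0 hB0, Real.mul_rpow hM0 (by positivity), Real.mul_rpow hM0 (by positivity),
    ← Real.rpow_mul (by positivity), e1]
  have e2 : M ^ (1 - θ) * M ^ θ = M := by
    rw [← Real.rpow_add_of_nonneg hM0 (by linarith) hθ0.le]; simp
  have e3 : (A * B) ^ (1 / 2 * (1 - θ)) * (A * B) ^ θ = (A * B) ^ ((1 + θ) / 2) := by
    rw [← Real.rpow_add_of_nonneg (by positivity) (by linarith) hθ0.le]
    congr 1; ring
  rw [← e3]
  nth_rewrite 3 [← e2]
  ring

end part3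

section part4

open scoped FourierTransform ENNReal NNReal

def sfConjNeg {N : ℕ} (f : SimpleFunc (Esp N) ℂ) : SimpleFunc (Esp N) ℂ :=
  (f.comp (fun x => -x) measurable_neg).map (starRingEnd ℂ)

lemma sfConjNeg_apply {N : ℕ} (f : SimpleFunc (Esp N) ℂ) (x : Esp N) :
    sfConjNeg f x = starRingEnd ℂ (f (-x)) := rfl

lemma sfConjNeg_fourier {N : ℕ} (f : SimpleFunc (Esp N) ℂ) (ξ : Esp N) :
    𝓕 (⇑(sfConjNeg f)) ξ = starRingEnd ℂ (𝓕 (⇑f) ξ) := by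
  rw [Real.fourier_eq', Real.fourier_eq', ← integral_conj, ← integral_neg_eq_self]
  congr 1; ext x
  simp only [sfConjNeg_apply, neg_neg, smul_eq_mul, map_mul, ← Complex.exp_conj]
  congr 2
  simp
  exact Or.inl (map_ofNat _ 2).symm

lemma sfConjNeg_int {N : ℕ} {f : SimpleFunc (Esp N) ℂ} (hf : Integrable f) : Integrable (sfConjNeg f) := by
  have h1 : Integrable (fun x => f (-x)) := hf.comp_neg
  refine (h1.norm).mono' (sfConjNeg f).aestronglyMeasurable ?_
  filter_upwards with x
  rw [sfConjNeg_apply, RCLike.norm_conj]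

open Complex.HadamardThreeLines in
lemma steinQ {N : ℕ} {θ q M Bd : ℝ} (hθ0 : 0 < θ) (hθ1 : θ < 1) (hq0 : 0 < q) (hq : q * (1 + θ) / 2 = 1)
    {m : ℂ → Esp N → ℂ}
    (hm : ∀ z ∈ verticalClosedStrip 0 1, AEStronglyMeasurable (m z) volume)
    (hd : ∀ ξ, ∀ z ∈ verticalClosedStrip 0 1, DifferentiableAt ℂ (fun z => m z ξ) z)
    (hB : ∀ z ∈ verticalClosedStrip 0 1, ∀ ξ, ‖m z ξ‖ ≤ Bd)
    (h0 : ∀ z : ℂ, z.re = 0 → ∀ ξ, ‖m z ξ‖ ≤ M)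
    (h1 : ∀ z : ℂ, z.re = 1 → Integrable (m z) ∧ ∀ x, ‖𝓕 (m z) x‖ ≤ M)
    {f : SimpleFunc (Esp N) ℂ} (hf : Integrable f) :
    ∫ ξ, (m θ ξ).re * ‖𝓕 (⇑f) ξ‖ ^ 2 ≤ M * (∫ x, ‖f x‖ ^ q) ^ (2 / q) := by
  have key := stein hθ0 hθ1 hq0 hq hm hd hB h0 h1 hf (sfConjNeg_int hf)
  have e1 : ∫ x, ‖sfConjNeg f x‖ ^ q = ∫ x, ‖f x‖ ^ q := by
    simp only [sfConjNeg_apply, RCLike.norm_conj]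
    exact integral_neg_eq_self (fun x => ‖f x‖ ^ q) volume
  have hA0 : 0 ≤ ∫ x, ‖f x‖ ^ q := integral_nonneg (fun x => by positivity)
  have e2 : ((∫ x, ‖f x‖ ^ q) * ∫ x, ‖f x‖ ^ q) ^ (1 / q) = (∫ x, ‖f x‖ ^ q) ^ (2 / q) := by
    rw [← pow_two, ← Real.rpow_natCast, ← Real.rpow_mul hA0]
    congr 1; push_cast; ring
  rw [e1, e2] at key
  refine le_trans ?_ key
  refine le_trans (le_of_eq ?_) (Complex.re_le_norm _)
  have hθc : (θ : ℂ) ∈ verticalClosedStrip 0 1 := by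
    simp [verticalClosedStrip, hθ0.le, hθ1.le]
  have hf2 : MemLp f 2 (volume : Measure (Esp N)) :=
    (SimpleFunc.memLp_iff_integrable (by norm_num) (by norm_num)).2 hf
  have hF := (fourier_L1_L2 hf hf2).1
  have hFi : Integrable (fun ξ => 𝓕 (⇑f) ξ * 𝓕 (⇑(sfConjNeg f)) ξ) := by
    refine MemLp.integrable_mul hF (fourier_L1_L2 (sfConjNeg_int hf) ?_).1
    exact (SimpleFunc.memLp_iff_integrable (by norm_num) (by norm_num)).2 (sfConjNeg_int hf)
  have hint : Integrable (fun ξ => m θ ξ * (𝓕 (⇑f) ξ * 𝓕 (⇑(sfConjNeg f)) ξ)) := by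
    refine Integrable.bdd_mul (c := Bd) hFi (hm _ hθc) ?_
    filter_upwards with ξ using hB _ hθc ξ
  have := integral_re (𝕜 := ℂ) hint
  refine Eq.trans ?_ this
  congr 1; ext ξ
  rw [sfConjNeg_fourier, Complex.mul_conj, Complex.normSq_eq_norm_sq]
  exact (Complex.re_mul_ofReal _ _).symm

end part4

section part5

open scoped FourierTransform ENNReal NNReal

open Complex.HadamardThreeLines in
lemma highQ {N : ℕ} {θ q s : ℝ} (hθ0 : 0 < θ) (hθ1 : θ < 1) (hq0 : 0 < q) (hq : q * (1 + θ) / 2 = 1)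
    (hs : 0 < s) (hσ : (N : ℝ) / 2 < s / θ) :
    ∃ C : ℝ, 0 ≤ C ∧ ∀ f : SimpleFunc (Esp N) ℂ, Integrable f →
      ∫ ξ, (1 + ‖ξ‖ ^ 2) ^ (-s) * ‖𝓕 (⇑f) ξ‖ ^ 2 ≤ C * (∫ x, ‖f x‖ ^ q) ^ (2 / q) := by
  set σ := s / θ with hσd
  have hσ0 : 0 < σ := by positivity
  set m : ℂ → Esp N → ℂ := fun z ξ => Complex.exp (-(σ * Real.log (1 + ‖ξ‖ ^ 2) : ℝ) * z) with hm
  have hL : ∀ ξ : Esp N, 0 ≤ σ * Real.log (1 + ‖ξ‖ ^ 2) := fun ξ =>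
    mul_nonneg hσ0.le (Real.log_nonneg (by nlinarith [sq_nonneg ‖ξ‖]))
  have hnorm : ∀ z ξ, ‖m z ξ‖ = (1 + ‖ξ‖ ^ 2) ^ (-(σ * z.re)) := by
    intro z ξ
    have : (0 : ℝ) < 1 + ‖ξ‖ ^ 2 := by positivity
    rw [hm, Complex.norm_exp, Real.rpow_def_of_pos this, ← Complex.ofReal_neg, Complex.re_ofReal_mul]
    congr 1; ring
  have hcont : ∀ z, Continuous (m z) := by
    intro z
    have : ∀ ξ : Esp N, 1 + ‖ξ‖ ^ 2 ≠ 0 := fun ξ => by positivity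
    have h1 : Continuous (fun ξ : Esp N => Real.log (1 + ‖ξ‖ ^ 2)) := Continuous.log (by fun_prop) this
    simp only [hm]
    fun_prop
  have hle1 : ∀ z : ℂ, 0 ≤ z.re → ∀ ξ, ‖m z ξ‖ ≤ 1 := by
    intro z hz ξ
    rw [hnorm]
    exact Real.rpow_le_one_of_one_le_of_nonpos (by nlinarith [sq_nonneg ‖ξ‖]) (by nlinarith)
  have hint : Integrable (fun ξ : Esp N => (1 + ‖ξ‖ ^ 2) ^ (-σ)) := by
    have := integrable_rpow_neg_one_add_norm_sq (E := Esp N) (μ := volume) (r := 2 * σ) (by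
      rw [finrank_euclideanSpace_fin]; linarith)
    convert this using 3; ring
  set M := max 1 (∫ ξ : Esp N, (1 + ‖ξ‖ ^ 2) ^ (-σ)) with hM
  refine ⟨M, by positivity, fun f hf => ?_⟩
  have hst := steinQ (m := m) (M := M) (Bd := 1) hθ0 hθ1 hq0 hq
    (fun z _ => (hcont z).aestronglyMeasurable) (fun ξ z _ => by simp only [hm]; fun_prop)
    (fun z hz ξ => hle1 z (by rw [verticalClosedStrip, Set.mem_preimage, Set.mem_Icc] at hz; exact hz.1) ξ)
    (fun z hz ξ => (hle1 z hz.ge ξ).trans (le_max_left _ _))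
    (fun z hz => ?_) hf
  · refine le_trans (le_of_eq ?_) hst
    congr 1; ext ξ
    congr 1
    have : (0 : ℝ) < 1 + ‖ξ‖ ^ 2 := by positivity
    simp only [hm]
    rw [← Complex.ofReal_neg, ← Complex.ofReal_mul, ← Complex.ofReal_exp, Complex.ofReal_re,
      Real.rpow_def_of_pos this, hσd]
    congr 1; field_simp
  · have e : (fun ξ => ‖m z ξ‖) = fun ξ => (1 + ‖ξ‖ ^ 2) ^ (-σ) := by
      ext ξ; rw [hnorm, hz, mul_one]
    refine ⟨(integrable_norm_iff (hcont z).aestronglyMeasurable).1 (e ▸ hint), fun x => ?_⟩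
    refine (norm_fourier_le' _ _).trans ?_
    rw [e]; exact le_max_right _ _

end part5

section part6

open scoped FourierTransform ENNReal NNReal

lemma osc_P_deriv (v : ℝ) : HasDerivAt (fun v : ℝ => ((v / (1 + v ^ 2) : ℝ) : ℂ) * Complex.exp (((-(Real.pi * v ^ 2) : ℝ) : ℂ) * Complex.I))
    (Complex.exp (((-(Real.pi * v ^ 2) : ℝ) : ℂ) * Complex.I) *
      ((((1 - v ^ 2) / (1 + v ^ 2) ^ 2 : ℝ) : ℂ) - 2 * Real.pi * Complex.I + ((2 * Real.pi / (1 + v ^ 2) : ℝ) : ℂ) * Complex.I)) v := by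
  have hpos : (1 + v ^ 2) ≠ 0 := by positivity
  have h1 : HasDerivAt (fun v : ℝ => v / (1 + v ^ 2)) ((1 * (1 + v ^ 2) - v * (2 * v)) / (1 + v ^ 2) ^ 2) v := by
    refine (hasDerivAt_id v).div ?_ hpos
    simpa using (hasDerivAt_pow 2 v).const_add 1
  have h2 : HasDerivAt (fun v : ℝ => (-(Real.pi * v ^ 2))) (-(Real.pi * (2 * v))) v := by
    have := ((hasDerivAt_pow 2 v).const_mul Real.pi).neg
    refine this.congr_deriv ?_
    simp
  have h3 := (h2.ofReal_comp.mul_const Complex.I).cexp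
  refine (h1.ofReal_comp.mul h3).congr_deriv ?_
  have hposc : (1 + (v : ℂ) ^ 2) ≠ 0 := by exact_mod_cast hpos
  push_cast
  field_simp
  ring

lemma osc {r M' : ℝ} (hr : 0 ≤ r) (hM' : 0 ≤ M') {B B' : ℝ → ℂ} {W : ℝ} (hW : 1 ≤ W)
    (hB : ∀ w, 0 < w → HasDerivAt B (B' w) w)
    (hb : ∀ w, 1 ≤ w → ‖B w‖ ≤ 1) (hb' : ∀ w, 1 ≤ w → ‖B' w‖ ≤ M' / w) :
    ‖∫ w in (1 : ℝ)..W, B w * Complex.exp (((-(Real.pi * (w - r / w) ^ 2) : ℝ) : ℂ) * Complex.I)‖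
      ≤ 11 + 4 * M' := by
  have hpi := Real.pi_gt_three
  have hpi4 := Real.pi_lt_four
  set v : ℝ → ℝ := fun w => w - r / w with hv
  set h : ℝ → ℝ := fun w => w ^ 2 / (w ^ 2 + r) with hh
  set e : ℝ → ℂ := fun v => Complex.exp (((-(Real.pi * v ^ 2) : ℝ) : ℂ) * Complex.I) with he
  set P : ℝ → ℂ := fun v => ((v / (1 + v ^ 2) : ℝ) : ℂ) * e v with hP
  set P' : ℝ → ℂ := fun v => e v *
      ((((1 - v ^ 2) / (1 + v ^ 2) ^ 2 : ℝ) : ℂ) - 2 * Real.pi * Complex.I + ((2 * Real.pi / (1 + v ^ 2) : ℝ) : ℂ) * Complex.I) with hP'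
  have hen : ∀ v, ‖e v‖ = 1 := fun v => by rw [he]; exact Complex.norm_exp_ofReal_mul_I _
  have hPn : ∀ v, ‖P v‖ = |v| / (1 + v ^ 2) := by
    intro v
    rw [hP]; simp only
    rw [norm_mul, hen, mul_one, Complex.norm_real, Real.norm_eq_abs, abs_div, abs_of_pos (by positivity : 0 < 1 + v ^ 2)]
  have hPn1 : ∀ v, ‖P v‖ ≤ 1 / 2 := by
    intro v
    rw [hPn, div_le_div_iff₀ (by positivity) (by norm_num)]
    nlinarith [sq_nonneg (|v| - 1), sq_abs v]
  have hvd : ∀ w, 0 < w → HasDerivAt v (1 + r / w ^ 2) w := by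
    intro w hw
    have := (hasDerivAt_id w).sub ((hasDerivAt_inv hw.ne').const_mul r)
    refine (this.congr_deriv ?_)
    ring
  have hhd : ∀ w, 0 < w → HasDerivAt h (2 * w * r / (w ^ 2 + r) ^ 2) w := by
    intro w hw
    have h1 : HasDerivAt (fun w : ℝ => w ^ 2) (2 * w) w := by simpa using hasDerivAt_pow 2 w
    have := h1.div (h1.add_const r) (by positivity)
    refine this.congr_deriv ?_
    ring
  have hh0 : ∀ w, 0 < w → 0 ≤ h w := fun w hw => by simp only [hh]; positivity
  have hh1 : ∀ w, 0 < w → h w ≤ 1 := fun w hw => by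
    simp only [hh]; rw [div_le_one (by positivity)]; linarith
  have hhv : ∀ w, 0 < w → h w * (1 + r / w ^ 2) = 1 := by
    intro w hw; simp only [hh]; field_simp
  set G : ℝ → ℂ := fun w => B w * ((h w : ℂ) * P (v w)) with hG
  have hGd : ∀ w, 0 < w → HasDerivAt G (B' w * ((h w : ℂ) * P (v w)) + B w * (((2 * w * r / (w ^ 2 + r) ^ 2 : ℝ) : ℂ) * P (v w)) + B w * P' (v w)) w := by
    intro w hw
    have hPd : HasDerivAt (fun w => P (v w)) ((1 + r / w ^ 2) • P' (v w)) w :=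
      HasDerivAt.scomp (h := v) (h' := 1 + r / w ^ 2) w (osc_P_deriv (v w)) (hvd w hw)
    refine ((hB w hw).mul (((hhd w hw).ofReal_comp).mul hPd)).congr_deriv ?_
    have e1 : ((h w : ℝ) : ℂ) * ((1 + r / w ^ 2 : ℝ) : ℂ) = 1 := by exact_mod_cast hhv w hw
    rw [Complex.real_smul]
    simp only [Pi.mul_apply]
    linear_combination (B w * P' (v w)) * e1
  have hGn : ∀ w, 1 ≤ w → ‖G w‖ ≤ 1 / 2 := by
    intro w hw
    have hw0 : 0 < w := by linarith
    rw [hG]; simp only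
    rw [norm_mul, norm_mul, Complex.norm_real, Real.norm_eq_abs, abs_of_nonneg (hh0 w hw0)]
    calc ‖B w‖ * (h w * ‖P (v w)‖) ≤ 1 * (1 * (1 / 2)) := by
          have := hb w hw; have := hh1 w hw0; have := hPn1 (v w); have := hh0 w hw0
          gcongr
      _ = 1 / 2 := by ring
  have hBe : ∀ w, 0 < w → ContinuousAt (fun w => B w * e (v w)) w := by
    intro w hw
    have h1 := (hB w hw).continuousAt
    have h2 := (hvd w hw).continuousAt
    have h3 : Continuous e := by rw [he]; fun_prop
    exact h1.mul (h3.continuousAt.comp h2)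
  have hcont : ContinuousOn (fun w => B w * e (v w)) (Set.Ioi 0) :=
    fun w hw => (hBe w hw).continuousWithinAt
  set F : ℝ → ℂ := fun W => ∫ w in (1 : ℝ)..W, B w * e (v w) with hF
  have hFd : ∀ w, 1 ≤ w → HasDerivAt F (B w * e (v w)) w := by
    intro w hw
    have hw0 : 0 < w := by linarith
    apply intervalIntegral.integral_hasDerivAt_right
    · apply ContinuousOn.intervalIntegrable
      apply hcont.mono
      rw [Set.uIcc_of_le hw]
      intro x hx; exact lt_of_lt_of_le one_pos hx.1
    · exact hcont.stronglyMeasurableAtFilter isOpen_Ioi w hw0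
    · exact hBe w hw0
  set c : ℂ := Complex.I / (2 * Real.pi) with hc
  have hcn : ‖c‖ ≤ 1 / 6 := by
    rw [hc, norm_div, Complex.norm_I, norm_mul, Complex.norm_real, Real.norm_eq_abs, abs_of_pos Real.pi_pos]
    simp only [Complex.norm_ofNat]
    apply one_div_le_one_div_of_le <;> linarith
  set Ψ : ℝ → ℂ := fun w => F w - c * G w with hΨ
  set bd : ℝ → ℝ := fun w => 1 + (M' + 2) * (Real.arctan (v w) + Real.pi / 2) + h w with hbd
  have hmain : ‖Ψ W‖ ≤ bd W := by
    refine image_norm_le_of_norm_deriv_right_le_deriv_boundary' (a := 1) (b := W) (f := Ψ)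
      (f' := fun w => B w * e (v w) - c * (B' w * ((h w : ℂ) * P (v w)) + B w * (((2 * w * r / (w ^ 2 + r) ^ 2 : ℝ) : ℂ) * P (v w)) + B w * P' (v w)))
      (B := bd) (B' := fun w => (M' + 2) * (1 / (1 + v w ^ 2) * (1 + r / w ^ 2)) + 2 * w * r / (w ^ 2 + r) ^ 2)
      ?_ ?_ ?_ ?_ ?_ ?_ ⟨hW, le_rfl⟩
    · intro w hw
      exact ((hFd w hw.1).sub ((hGd w (by linarith [hw.1])).const_mul c)).continuousAt.continuousWithinAt
    · intro w hw
      exact ((hFd w hw.1).sub ((hGd w (by linarith [hw.1])).const_mul c)).hasDerivWithinAt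
    · simp only [hΨ, hF, intervalIntegral.integral_same, zero_sub, norm_neg, norm_mul]
      have e1 : ‖c‖ * ‖G 1‖ ≤ 1 / 6 * (1 / 2) := by have := hGn 1 le_rfl; gcongr
      have e2 : 0 ≤ (M' + 2) * (Real.arctan (v 1) + Real.pi / 2) :=
        mul_nonneg (by linarith) (by linarith [Real.neg_pi_div_two_lt_arctan (v 1)])
      have e3 := hh0 1 one_pos
      simp only [hbd]; linarith
    · intro w hw
      have hw0 : 0 < w := by linarith [hw.1]
      have := ((((hvd w hw0).arctan.add_const (Real.pi / 2)).const_mul (M' + 2)).const_add 1).add (hhd w hw0)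
      exact this.continuousAt.continuousWithinAt
    · intro w hw
      have hw0 : 0 < w := by linarith [hw.1]
      have := ((((hvd w hw0).arctan.add_const (Real.pi / 2)).const_mul (M' + 2)).const_add 1).add (hhd w hw0)
      exact this.hasDerivWithinAt
    · intro w hw
      have hw1 : 1 ≤ w := hw.1
      have hw0 : 0 < w := by linarith
      set V := v w with hV
      set H := h w with hH
      set D := 1 + r / w ^ 2 with hD
      set K := 2 * w * r / (w ^ 2 + r) ^ 2 with hK
      have hK0 : 0 ≤ K := by rw [hK]; positivity
      have hD0 : 0 < D := by rw [hD]; positivity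
      have hHD : H * D = 1 := hhv w hw0
      have id1 : B w * e V - c * (B' w * ((H : ℂ) * P V) + B w * ((K : ℂ) * P V) + B w * P' V)
          = -c * (B' w * ((H : ℂ) * P V) + B w * ((K : ℂ) * P V)
              + B w * (e V * ((((1 - V ^ 2) / (1 + V ^ 2) ^ 2 : ℝ) : ℂ) + ((2 * Real.pi / (1 + V ^ 2) : ℝ) : ℂ) * Complex.I))) := by
        have e2 : c * (2 * Real.pi * Complex.I) = -1 := by
          have : (Real.pi : ℂ) ≠ 0 := by exact_mod_cast Real.pi_ne_zero
          rw [hc]; field_simp; exact Complex.I_sq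
        simp only [hP']
        linear_combination (B w * e V) * e2
      rw [id1, norm_mul, norm_neg]
      set S := 1 / (1 + V ^ 2) with hS
      have hS0 : 0 < S := by rw [hS]; positivity
      have t1 : ‖B' w * ((H : ℂ) * P V)‖ ≤ M' * (S * D) := by
        rw [norm_mul, norm_mul, Complex.norm_real, Real.norm_eq_abs, abs_of_nonneg (hh0 w hw0), hPn]
        have hVle : H * |V| ≤ w := by
          have : |V| ≤ w * D := by
            rw [hV, hv, hD]; simp only
            have e3 : w * (1 + r / w ^ 2) = w + r / w := by field_simp
            rw [e3, abs_le]
            have : 0 ≤ r / w := by positivity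
            constructor <;> linarith
          calc H * |V| ≤ H * (w * D) := mul_le_mul_of_nonneg_left this (hh0 w hw0)
            _ = w * (H * D) := by ring
            _ = w := by rw [hHD, mul_one]
        have e4 : H * (|V| / (1 + V ^ 2)) ≤ w * S := by
          rw [hS, mul_one_div, ← mul_div_assoc]; gcongr
        have e5 : 1 ≤ D := by rw [hD]; have : 0 ≤ r / w ^ 2 := by positivity
                              linarith
        calc ‖B' w‖ * (H * (|V| / (1 + V ^ 2))) ≤ M' / w * (w * S) := by
              have := hb' w hw1
              have : 0 ≤ M' / w := by positivity
              gcongr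
          _ = M' * (S * 1) := by field_simp
          _ ≤ M' * (S * D) := by gcongr
      have t2 : ‖B w * ((K : ℂ) * P V)‖ ≤ K := by
        rw [norm_mul, norm_mul, Complex.norm_real, Real.norm_eq_abs, abs_of_nonneg hK0]
        calc ‖B w‖ * (K * ‖P V‖) ≤ 1 * (K * 1) := by
              have := hb w hw1
              have := hPn1 V
              gcongr; linarith
          _ = K := by ring
      have t3 : ‖B w * (e V * ((((1 - V ^ 2) / (1 + V ^ 2) ^ 2 : ℝ) : ℂ) + ((2 * Real.pi / (1 + V ^ 2) : ℝ) : ℂ) * Complex.I))‖ ≤ 9 * (S * D) := by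
        rw [norm_mul, norm_mul, hen, one_mul]
        have e5 : 1 ≤ D := by rw [hD]; have : 0 ≤ r / w ^ 2 := by positivity
                              linarith
        have e6 : ‖(((1 - V ^ 2) / (1 + V ^ 2) ^ 2 : ℝ) : ℂ)‖ ≤ S := by
          rw [Complex.norm_real, Real.norm_eq_abs, abs_div, abs_of_pos (by positivity : 0 < (1 + V ^ 2) ^ 2),
            hS, div_le_div_iff₀ (by positivity) (by positivity)]
          have : |1 - V ^ 2| ≤ 1 + V ^ 2 := by rw [abs_le]; constructor <;> nlinarith [sq_nonneg V]
          nlinarith [sq_nonneg V]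
        have e7 : ‖((2 * Real.pi / (1 + V ^ 2) : ℝ) : ℂ) * Complex.I‖ ≤ 8 * S := by
          rw [norm_mul, Complex.norm_I, mul_one, Complex.norm_real, Real.norm_eq_abs, abs_of_pos (by positivity), hS, mul_one_div]
          gcongr; linarith
        calc _ ≤ 1 * (S + 8 * S) := by
              have := hb w hw1
              gcongr
              exact (norm_add_le _ _).trans (add_le_add e6 e7)
          _ = 9 * (S * 1) := by ring
          _ ≤ 9 * (S * D) := by gcongr
      have hSD : 0 ≤ S * D := by positivity
      calc _ ≤ 1 / 6 * (M' * (S * D) + K + 9 * (S * D)) := by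
            gcongr
            refine (norm_add_le _ _).trans (add_le_add ((norm_add_le _ _).trans (add_le_add t1 t2)) t3)
        _ ≤ _ := by nlinarith [mul_nonneg hM' hSD]
  have hW0 : 0 < W := by linarith
  have hlast : F W = Ψ W + c * G W := by simp only [hΨ]; ring
  show ‖F W‖ ≤ _
  rw [hlast]
  have e1 : ‖c * G W‖ ≤ 1 / 6 * (1 / 2) := by rw [norm_mul]; have := hGn W hW; gcongr
  have e2 : bd W ≤ 1 + (M' + 2) * 4 + 1 := by
    have := hh1 W hW0
    have := Real.arctan_lt_pi_div_two (v W)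
    simp only [hbd]
    gcongr
    linarith
  have := norm_add_le (Ψ W) (c * G W)
  linarith

end part6

section part7

open scoped FourierTransform ENNReal NNReal

/-- Log-amplitude on the large-time region. -/
def Lamp (N : ℕ) (β : ℂ) (lam r w : ℝ) : ℂ :=
  (2 * β - 1) * (Real.log w : ℝ) - (lam * w ^ 2 : ℝ) - ((N : ℂ) / 2) * Complex.log (1 - (w ^ 2 : ℝ) * Complex.I)
    + ((Real.pi * r ^ 2 / (1 + w ^ 4) : ℝ) : ℂ) * (((w ^ 2)⁻¹ : ℝ) * Complex.I - 1)

def Lamp' (N : ℕ) (β : ℂ) (lam r w : ℝ) : ℂ :=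
  (2 * β - 1) * (w⁻¹ : ℝ) - (lam * (2 * w) : ℝ) - ((N : ℂ) / 2) * (-((2 * w : ℝ) : ℂ) * Complex.I / (1 - (w ^ 2 : ℝ) * Complex.I))
    + (((-(Real.pi * r ^ 2 * (4 * w ^ 3)) / (1 + w ^ 4) ^ 2 : ℝ) : ℂ) * (((w ^ 2)⁻¹ : ℝ) * Complex.I - 1)
      + ((Real.pi * r ^ 2 / (1 + w ^ 4) : ℝ) : ℂ) * ((-(2 * w) / (w ^ 2) ^ 2 : ℝ) * Complex.I))

lemma slit_aux (t : ℝ) : (1 - (t : ℂ) * Complex.I) ∈ Complex.slitPlane := by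
  left; simp

lemma norm_aux (t : ℝ) : ‖(1 - (t : ℂ) * Complex.I)‖ = Real.sqrt (1 + t ^ 2) := by
  rw [Complex.norm_def, Complex.normSq_apply]; simp; ring_nf

lemma Lamp_deriv (N : ℕ) (β : ℂ) (lam r : ℝ) {w : ℝ} (hw : 0 < w) :
    HasDerivAt (Lamp N β lam r) (Lamp' N β lam r w) w := by
  have h1 := ((Real.hasDerivAt_log hw.ne').ofReal_comp).const_mul (2 * β - 1)
  have hsq : HasDerivAt (fun w : ℝ => w ^ 2) (2 * w) w := by simpa using hasDerivAt_pow 2 w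
  have h2 := (hsq.const_mul lam).ofReal_comp
  have h3a : HasDerivAt (fun w : ℝ => (1 - ((w ^ 2 : ℝ) : ℂ) * Complex.I)) (-((2 * w : ℝ) : ℂ) * Complex.I) w := by
    have := (hsq.ofReal_comp.mul_const Complex.I).const_sub 1
    refine this.congr_deriv ?_
    ring
  have h3 := (h3a.clog_real (slit_aux (w ^ 2))).const_mul ((N : ℂ) / 2)
  have h4a : HasDerivAt (fun w : ℝ => 1 + w ^ 4) (4 * w ^ 3) w := by
    simpa using (hasDerivAt_pow 4 w).const_add 1
  have h4b : HasDerivAt (fun w : ℝ => Real.pi * r ^ 2 / (1 + w ^ 4)) (-(Real.pi * r ^ 2 * (4 * w ^ 3)) / (1 + w ^ 4) ^ 2) w := by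
    have := (hasDerivAt_const w (Real.pi * r ^ 2)).div h4a (by positivity)
    refine this.congr_deriv ?_
    ring
  have h4c : HasDerivAt (fun w : ℝ => (w ^ 2)⁻¹) (-(2 * w) / (w ^ 2) ^ 2) w := hsq.inv (by positivity)
  have h4 := h4b.ofReal_comp.mul ((h4c.ofReal_comp.mul_const Complex.I).sub_const 1)
  exact ((h1.sub h2).sub h3).add h4

lemma Lamp_re {N : ℕ} {β : ℂ} {b lam r w : ℝ} (hβ : β.re = b) (hb : 2 * b ≤ N + 1) (hw : 1 ≤ w) :
    (Lamp N β lam r w).re ≤ -(lam * w ^ 2) - Real.pi * r ^ 2 / (1 + w ^ 4) := by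
  have hlog : 0 ≤ Real.log w := Real.log_nonneg hw
  have e : (Lamp N β lam r w).re = (2 * b - 1) * Real.log w - lam * w ^ 2
      - N / 2 * Real.log ‖(1 - ((w ^ 2 : ℝ) : ℂ) * Complex.I)‖ - Real.pi * r ^ 2 / (1 + w ^ 4) := by
    have hN : ((N : ℂ) / 2) = ((N / 2 : ℝ) : ℂ) := by push_cast; rfl
    have h2 : 2 * β - 1 = ((2 : ℝ) : ℂ) * β - ((1 : ℝ) : ℂ) := by push_cast; rfl
    rw [Lamp, hN, h2, Complex.add_re, Complex.sub_re, Complex.sub_re, Complex.re_mul_ofReal,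
      Complex.re_ofReal_mul, Complex.re_ofReal_mul, Complex.log_re, Complex.sub_re, Complex.re_ofReal_mul,
      Complex.ofReal_re, Complex.ofReal_re, Complex.sub_re, Complex.re_ofReal_mul, hβ]
    simp
    ring
  have hn : 2 * Real.log w ≤ Real.log ‖(1 - ((w ^ 2 : ℝ) : ℂ) * Complex.I)‖ := by
    have hw0 : 0 < w := by linarith
    have : Real.log (w ^ 2) = 2 * Real.log w := by simp
    rw [← this]
    apply Real.log_le_log (by positivity)
    rw [norm_aux]
    apply Real.le_sqrt_of_sq_le
    linarith
  rw [e]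
  have hN0 : (0 : ℝ) ≤ N / 2 := by positivity
  nlinarith [mul_le_mul_of_nonneg_left hn hN0]

lemma Lamp'_norm {N : ℕ} {β : ℂ} {lam r w : ℝ} (hl : 0 ≤ lam) (hw : 1 ≤ w) :
    ‖Lamp' N β lam r w‖ ≤ (‖2 * β - 1‖ + N + 2 * (lam * w ^ 2) + 10 * (Real.pi * r ^ 2 / (1 + w ^ 4))) / w := by
  have hw0 : 0 < w := by linarith
  set ρ := Real.pi * r ^ 2 / (1 + w ^ 4) with hρ
  have hρ0 : 0 ≤ ρ := by rw [hρ]; positivity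
  have t1 : ‖(2 * β - 1) * ((w⁻¹ : ℝ) : ℂ)‖ = ‖2 * β - 1‖ / w := by
    rw [norm_mul, Complex.norm_real, Real.norm_eq_abs, abs_of_pos (by positivity)]; rfl
  have t2 : ‖((lam * (2 * w) : ℝ) : ℂ)‖ = 2 * (lam * w ^ 2) / w := by
    rw [Complex.norm_real, Real.norm_eq_abs, abs_of_nonneg (by positivity)]; field_simp
  have t3 : ‖((N : ℂ) / 2) * (-((2 * w : ℝ) : ℂ) * Complex.I / (1 - (w ^ 2 : ℝ) * Complex.I))‖ ≤ N / w := by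
    rw [norm_mul, norm_div, norm_div, norm_mul, norm_neg, Complex.norm_I, Complex.norm_real, Complex.norm_natCast, norm_aux,
      Real.norm_eq_abs, abs_of_pos (by positivity : 0 < 2 * w)]
    have : w ^ 2 ≤ Real.sqrt (1 + (w ^ 2) ^ 2) := Real.le_sqrt_of_sq_le (by linarith)
    calc (N : ℝ) / ‖(2 : ℂ)‖ * (2 * w * 1 / Real.sqrt (1 + (w ^ 2) ^ 2)) ≤ N / ‖(2 : ℂ)‖ * (2 * w * 1 / w ^ 2) := by gcongr
      _ = N / w := by simp only [Complex.norm_ofNat]; field_simp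
  have hw4 : w⁻¹ ≤ 1 := inv_le_one_of_one_le₀ hw
  have hw2 : (w ^ 2)⁻¹ ≤ 1 := inv_le_one_of_one_le₀ (one_le_pow₀ hw)
  have t4 : ‖((-(Real.pi * r ^ 2 * (4 * w ^ 3)) / (1 + w ^ 4) ^ 2 : ℝ) : ℂ) * (((w ^ 2)⁻¹ : ℝ) * Complex.I - 1)‖ ≤ 8 * ρ / w := by
    have e1 : ‖((-(Real.pi * r ^ 2 * (4 * w ^ 3)) / (1 + w ^ 4) ^ 2 : ℝ) : ℂ)‖ ≤ 4 * ρ / w := by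
      rw [Complex.norm_real, Real.norm_eq_abs, abs_div, abs_neg, abs_of_nonneg (by positivity), abs_of_pos (by positivity)]
      have : Real.pi * r ^ 2 * (4 * w ^ 3) / (1 + w ^ 4) ^ 2 = 4 * ρ * (w ^ 3 / (1 + w ^ 4)) := by
        rw [hρ]; field_simp
      rw [this, show 4 * ρ / w = 4 * ρ * (1 / w) by ring]
      gcongr 4 * ρ * ?_
      rw [div_le_div_iff₀ (by positivity) hw0]
      nlinarith
    have e2 : ‖(((w ^ 2)⁻¹ : ℝ) : ℂ) * Complex.I - 1‖ ≤ 2 := by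
      refine (norm_sub_le _ _).trans ?_
      rw [norm_mul, Complex.norm_I, Complex.norm_real, Real.norm_eq_abs, abs_of_pos (by positivity), norm_one]
      linarith
    rw [norm_mul]
    calc _ ≤ 4 * ρ / w * 2 := by gcongr
      _ = _ := by ring
  have t5 : ‖(ρ : ℂ) * (((-(2 * w) / (w ^ 2) ^ 2 : ℝ) : ℂ) * Complex.I)‖ ≤ 2 * ρ / w := by
    rw [norm_mul, norm_mul, Complex.norm_I, mul_one, Complex.norm_real, Complex.norm_real, Real.norm_eq_abs, Real.norm_eq_abs,
      abs_of_nonneg hρ0, abs_div, abs_neg, abs_of_pos (by positivity), abs_of_pos (by positivity)]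
    have : ρ * (2 * w / (w ^ 2) ^ 2) = 2 * ρ / w * (w ^ 2)⁻¹ := by field_simp
    rw [this]
    exact mul_le_of_le_one_right (by positivity) hw2
  rw [Lamp']
  have q1 := norm_sub_le ((2 * β - 1) * ((w⁻¹ : ℝ) : ℂ)) ((lam * (2 * w) : ℝ) : ℂ)
  have q2 := norm_sub_le ((2 * β - 1) * ((w⁻¹ : ℝ) : ℂ) - ((lam * (2 * w) : ℝ) : ℂ)) (((N : ℂ) / 2) * (-((2 * w : ℝ) : ℂ) * Complex.I / (1 - (w ^ 2 : ℝ) * Complex.I)))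
  refine (norm_add_le_of_le (q2.trans (add_le_add (q1.trans (add_le_add t1.le t2.le)) t3)) (norm_add_le_of_le t4 t5)).trans (le_of_eq ?_)
  field_simp; ring

lemma Bamp_osc {N : ℕ} {β : ℂ} {b lam r : ℝ} (hβ : β.re = b) (hb : 2 * b ≤ N + 1) (hl : 0 ≤ lam) (hr : 0 ≤ r)
    {W : ℝ} (hW : 1 ≤ W) :
    ‖∫ w in (1 : ℝ)..W, Complex.exp (Lamp N β lam r w) *
      Complex.exp (((-(Real.pi * (w - r / w) ^ 2) : ℝ) : ℂ) * Complex.I)‖ ≤ 11 + 4 * (‖2 * β - 1‖ + N + 12) := by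
  have hbd : ∀ w, 1 ≤ w → ‖Complex.exp (Lamp N β lam r w)‖ ≤ Real.exp (-(lam * w ^ 2) - Real.pi * r ^ 2 / (1 + w ^ 4)) := by
    intro w hw
    rw [Complex.norm_exp]
    exact Real.exp_le_exp.2 (Lamp_re hβ hb hw)
  refine osc (B' := fun w => Complex.exp (Lamp N β lam r w) * Lamp' N β lam r w) hr (by positivity) hW
    (fun w hw => (Lamp_deriv N β lam r hw).cexp) (fun w hw => (hbd w hw).trans ?_) (fun w hw => ?_)
  · have : 0 ≤ lam * w ^ 2 := by positivity
    have : 0 ≤ Real.pi * r ^ 2 / (1 + w ^ 4) := by positivity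
    rw [Real.exp_le_one_iff]; linarith
  · rw [norm_mul]
    have hw0 : 0 < w := by linarith
    set x := lam * w ^ 2 with hx
    set ρ := Real.pi * r ^ 2 / (1 + w ^ 4) with hρ
    have hx0 : 0 ≤ x := by rw [hx]; positivity
    have hρ0 : 0 ≤ ρ := by rw [hρ]; positivity
    refine (mul_le_mul (hbd w hw) (Lamp'_norm hl hw) (norm_nonneg _) (Real.exp_nonneg _)).trans ?_
    rw [← hx, ← hρ, ← mul_div_assoc]
    gcongr
    have hone : Real.exp (-x - ρ) * (1 + (x + ρ)) ≤ 1 := by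
      have h1 := Real.add_one_le_exp (x + ρ)
      have h2 : Real.exp (-x - ρ) * Real.exp (x + ρ) = 1 := by rw [← Real.exp_add]; simp
      nlinarith [Real.exp_pos (-x - ρ)]
    have hE := Real.exp_pos (-x - ρ)
    have h1 : Real.exp (-x - ρ) ≤ 1 := by nlinarith
    have h2 : Real.exp (-x - ρ) * x ≤ 1 := by nlinarith
    have h3 : Real.exp (-x - ρ) * ρ ≤ 1 := by nlinarith
    have hc : 0 ≤ ‖2 * β - 1‖ + N := by positivity
    nlinarith [mul_le_mul_of_nonneg_right h1 hc]

end part7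

section part8

open scoped FourierTransform ENNReal NNReal

def Jf (N : ℕ) (β : ℂ) (lam r τ : ℝ) : ℂ :=
  Complex.exp ((β - 1) * (Real.log τ : ℝ) - (lam * τ : ℝ) - (Real.pi * τ : ℝ) * Complex.I
    - ((N : ℂ) / 2) * Complex.log (1 - (τ : ℂ) * Complex.I)
    - ((Real.pi * r ^ 2 / (1 + τ ^ 2) : ℝ) : ℂ) * (1 + τ * Complex.I))

lemma Jf_norm {N : ℕ} {β : ℂ} {b lam r τ : ℝ} (hβ : β.re = b) (hl : 0 ≤ lam) (hτ : 0 < τ) :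
    ‖Jf N β lam r τ‖ ≤ τ ^ (b - 1) := by
  have e : ((β - 1) * (Real.log τ : ℝ) - (lam * τ : ℝ) - (Real.pi * τ : ℝ) * Complex.I
    - ((N : ℂ) / 2) * Complex.log (1 - (τ : ℂ) * Complex.I)
    - ((Real.pi * r ^ 2 / (1 + τ ^ 2) : ℝ) : ℂ) * (1 + τ * Complex.I)).re =
      (b - 1) * Real.log τ - lam * τ - N / 2 * Real.log ‖1 - (τ : ℂ) * Complex.I‖ - Real.pi * r ^ 2 / (1 + τ ^ 2) := by
    have hN : ((N : ℂ) / 2) = ((N / 2 : ℝ) : ℂ) := by push_cast; rfl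
    rw [hN, Complex.sub_re, Complex.sub_re, Complex.sub_re, Complex.sub_re, Complex.re_mul_ofReal,
      Complex.re_ofReal_mul, Complex.re_ofReal_mul, Complex.re_ofReal_mul, Complex.log_re, Complex.sub_re,
      Complex.add_re, Complex.re_ofReal_mul, Complex.ofReal_re, hβ]
    simp
  rw [Jf, Complex.norm_exp, e, Real.rpow_def_of_pos hτ]
  apply Real.exp_le_exp.2
  have h1 : 0 ≤ Real.log ‖1 - (τ : ℂ) * Complex.I‖ := by
    apply Real.log_nonneg
    rw [norm_aux]
    apply Real.le_sqrt_of_sq_le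
    nlinarith [sq_nonneg τ]
  have h2 : 0 ≤ Real.pi * r ^ 2 / (1 + τ ^ 2) := by positivity
  have h3 : 0 ≤ lam * τ := by positivity
  have h4 : 0 ≤ N / 2 * Real.log ‖1 - (τ : ℂ) * Complex.I‖ := by positivity
  linarith

lemma Jf_sq {N : ℕ} {β : ℂ} {lam r w : ℝ} (hw : 0 < w) :
    (2 * w) • Jf N β lam r (w ^ 2) = (2 * Complex.exp (((-(2 * Real.pi * r) : ℝ) : ℂ) * Complex.I)) *
      (Complex.exp (Lamp N β lam r w) *
      Complex.exp (((-(Real.pi * (w - r / w) ^ 2) : ℝ) : ℂ) * Complex.I)) := by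
  have hw' : (w : ℂ) = Complex.exp (Real.log w : ℝ) := by
    rw [← Complex.ofReal_exp, Real.exp_log hw]
  rw [Complex.real_smul, Complex.ofReal_mul, hw', Complex.ofReal_ofNat, mul_assoc, mul_assoc, Jf, Lamp]
  congr 1
  rw [← Complex.exp_add, ← Complex.exp_add, ← Complex.exp_add]
  congr 1
  have hlog : Real.log (w ^ 2) = 2 * Real.log w := by simp
  rw [hlog]
  have h4 : (1 + (w : ℂ) ^ 4) ≠ 0 := by
    have : (1 + w ^ 4) ≠ 0 := by positivity
    exact_mod_cast this
  have hwc : (w : ℂ) ≠ 0 := by exact_mod_cast hw.ne'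
  have h42 : (1 + ((w : ℂ) ^ 2) ^ 2) = 1 + (w : ℂ) ^ 4 := by ring
  push_cast
  rw [h42]
  field_simp
  ring

lemma J_bound {N : ℕ} {β : ℂ} {b lam r : ℝ} (hb0 : 0 < b) (hβ : β.re = b) (hb : 2 * b ≤ N + 1) (hl : 0 ≤ lam) (hr : 0 ≤ r) :
    ‖∫ τ in Set.Ioi (0 : ℝ), Jf N β lam r τ‖ ≤ 1 / b + 2 * (11 + 4 * (‖2 * β - 1‖ + N + 12)) := by
  by_cases hint : IntegrableOn (Jf N β lam r) (Set.Ioi 0)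
  swap
  · rw [integral_undef hint, norm_zero]; positivity
  have hi1 : IntegrableOn (Jf N β lam r) (Set.Ioc 0 1) := hint.mono_set Set.Ioc_subset_Ioi_self
  have hi2 : IntegrableOn (Jf N β lam r) (Set.Ioi 1) := hint.mono_set (Set.Ioi_subset_Ioi zero_le_one)
  rw [← Set.Ioc_union_Ioi_eq_Ioi (zero_le_one (α := ℝ)), setIntegral_union (Set.Ioc_disjoint_Ioi le_rfl) measurableSet_Ioi hi1 hi2]
  refine norm_add_le_of_le ?_ ?_
  · have hI : IntervalIntegrable (fun τ : ℝ => τ ^ (b - 1)) volume 0 1 :=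
      intervalIntegral.intervalIntegrable_rpow' (by linarith)
    have hI' : IntegrableOn (fun τ : ℝ => τ ^ (b - 1)) (Set.Ioc 0 1) := (intervalIntegrable_iff_integrableOn_Ioc_of_le zero_le_one).1 hI
    have e : ∫ τ in Set.Ioc (0 : ℝ) 1, τ ^ (b - 1) = 1 / b := by
      rw [← intervalIntegral.integral_of_le zero_le_one, integral_rpow (Or.inl (by linarith))]
      simp [Real.zero_rpow hb0.ne']
    rw [← e]
    refine norm_integral_le_of_norm_le hI' ?_
    filter_upwards [ae_restrict_mem measurableSet_Ioc] with τ hτ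
    exact Jf_norm hβ hl hτ.1
  · have e := integral_comp_rpow_Ioi_of_pos' (g := Jf N β lam r) (p := 2) (by norm_num) (c := 1) zero_le_one
    rw [← e, Real.one_rpow]
    have e2 : ∫ w in Set.Ioi (1 : ℝ), (2 * w ^ ((2 : ℝ) - 1)) • Jf N β lam r (w ^ (2 : ℝ)) =
        ∫ w in Set.Ioi (1 : ℝ), (2 * Complex.exp (((-(2 * Real.pi * r) : ℝ) : ℂ) * Complex.I)) *
      (Complex.exp (Lamp N β lam r w) *
      Complex.exp (((-(Real.pi * (w - r / w) ^ 2) : ℝ) : ℂ) * Complex.I)) := by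
      refine setIntegral_congr_fun measurableSet_Ioi (fun w hw => ?_)
      have hw1 : (1 : ℝ) < w := hw
      rw [← Jf_sq (by linarith), show (2 : ℝ) - 1 = 1 by norm_num, Real.rpow_one, Real.rpow_two]
    rw [e2, integral_const_mul, norm_mul, norm_mul, Complex.norm_exp_ofReal_mul_I, mul_one, Complex.norm_ofNat]
    gcongr
    by_cases hint2 : IntegrableOn (fun w => Complex.exp (Lamp N β lam r w) *
      Complex.exp (((-(Real.pi * (w - r / w) ^ 2) : ℝ) : ℂ) * Complex.I)) (Set.Ioi 1)
    · refine le_of_tendsto (intervalIntegral_tendsto_integral_Ioi 1 hint2 tendsto_id).norm ?_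
      filter_upwards [eventually_ge_atTop 1] with W hW
      exact Bamp_osc hβ hb hl hr hW
    · rw [integral_undef hint2, norm_zero]; positivity

end part8

section part9

open scoped FourierTransform ENNReal NNReal

lemma gammaC {a c : ℂ} (ha : 0 < a.re) (hc : 0 < c.re) :
    ∫ t in Set.Ioi (0 : ℝ), (t : ℂ) ^ (a - 1) * Complex.exp (-(c * t)) = c ^ (-a) * Complex.Gamma a := by
  set ε := min c.re 1 / 2 with hε
  have hε0 : 0 < ε := by have := lt_min hc one_pos; rw [hε]; positivity
  have hεc : ε < c.re := by have := min_le_left c.re 1; rw [hε] at *; linarith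
  have hε1 : ε < 1 := by have := min_le_right c.re 1; rw [hε] at *; linarith
  set U : Set ℂ := {z | ε < z.re} with hU
  have hUo : IsOpen U := isOpen_lt continuous_const Complex.continuous_re
  have hUc : IsPreconnected U := (convex_halfSpace_re_gt ε).isPreconnected
  have hb : IntegrableOn (fun t : ℝ => t ^ (a.re - 1) * Real.exp (-ε * t)) (Set.Ioi 0) := by
    have := integrableOn_rpow_mul_exp_neg_mul_rpow (s := a.re - 1) (p := 1) (b := ε) (by linarith) one_pos hε0
    simpa using this
  have hf : DifferentiableOn ℂ (fun c : ℂ => ∫ t in Set.Ioi (0 : ℝ), (t : ℂ) ^ (a - 1) * Complex.exp (-(c * t))) U := by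
    refine holo_int hUo hb ?_ ?_ ?_
    · intro z hz
      refine ContinuousOn.aestronglyMeasurable ?_ measurableSet_Ioi
      intro t ht
      have ht0 : (0 : ℝ) < t := ht
      have h1 : ContinuousAt (fun t : ℝ => (t : ℂ) ^ (a - 1)) t :=
        Complex.continuousAt_ofReal_cpow_const _ _ (Or.inr ht0.ne')
      exact (h1.mul (by fun_prop)).continuousWithinAt
    · filter_upwards [ae_restrict_mem measurableSet_Ioi] with t ht z hz
      have ht0 : (0 : ℝ) < t := ht
      have hz' : ε < z.re := hz
      rw [norm_mul, Complex.norm_cpow_eq_rpow_re_of_pos ht0, Complex.norm_exp]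
      simp only [Complex.sub_re, Complex.one_re, Complex.neg_re, Complex.re_mul_ofReal]
      gcongr
      nlinarith
    · filter_upwards with t
      fun_prop
  have hg : DifferentiableOn ℂ (fun c : ℂ => c ^ (-a) * Complex.Gamma a) U := by
    intro z hz
    have hz' : ε < z.re := hz
    refine (DifferentiableAt.mul_const ?_ _).differentiableWithinAt
    exact differentiableAt_id.cpow_const (Or.inl (by simp; linarith))
  have key := AnalyticOnNhd.eqOn_of_preconnected_of_frequently_eq (hf.analyticOnNhd hUo) (hg.analyticOnNhd hUo) hUc
    (z₀ := 1) (by simpa [hU] using hε1) ?_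
  · exact key hεc
  · have ht : Tendsto (fun r : ℝ => (r : ℂ)) (𝓝[≠] 1) (𝓝[≠] 1) := by
      refine tendsto_nhdsWithin_iff.2 ⟨?_, ?_⟩
      · exact (Complex.continuous_ofReal.tendsto' 1 1 (by simp)).mono_left nhdsWithin_le_nhds
      · filter_upwards [self_mem_nhdsWithin] with r hr
        simpa using hr
    refine ht.frequently (Eventually.frequently ?_)
    have : ∀ᶠ r : ℝ in 𝓝[≠] 1, 0 < r := nhdsWithin_le_nhds (lt_mem_nhds one_pos)
    filter_upwards [this] with r hr
    rw [Complex.integral_cpow_mul_exp_neg_mul_Ioi ha hr, one_div, Complex.inv_cpow, Complex.cpow_neg]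
    rw [Complex.arg_ofReal_of_nonneg hr.le]; exact Real.pi_ne_zero.symm

lemma norm_Gamma_le {z : ℂ} (hz : 0 < z.re) : ‖Complex.Gamma z‖ ≤ Real.Gamma z.re := by
  rw [Complex.Gamma_eq_integral hz, Real.Gamma_eq_integral hz, Complex.GammaIntegral]
  refine norm_integral_le_of_norm_le (Real.GammaIntegral_convergent hz) ?_
  filter_upwards [ae_restrict_mem measurableSet_Ioi] with t ht
  have ht0 : (0 : ℝ) < t := ht
  rw [norm_mul, Complex.norm_cpow_eq_rpow_re_of_pos ht0, Complex.norm_real, Real.norm_eq_abs, abs_of_pos (Real.exp_pos _)]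
  simp

def cxi {N : ℕ} (lam : ℝ) (ξ : Esp N) : ℂ := (lam : ℂ) - ((Real.pi * (‖ξ‖ ^ 2 - 1) : ℝ) : ℂ) * Complex.I

lemma cxi_re {N : ℕ} (lam : ℝ) (ξ : Esp N) : (cxi lam ξ).re = lam := by
  rw [cxi, Complex.sub_re, Complex.re_ofReal_mul]; simp

lemma integrable_gauss_norm (N : ℕ) : Integrable (fun ξ : Esp N => Real.exp (-Real.pi * ‖ξ‖ ^ 2)) := by
  have := GaussianFourier.integrable_cexp_neg_mul_sq_norm_add (V := Esp N) (b := (Real.pi : ℂ)) (by simpa using Real.pi_pos) 0 0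
  refine this.norm.congr ?_
  filter_upwards with ξ
  rw [Complex.norm_exp]
  congr 1
  rw [← Complex.ofReal_neg, ← Complex.ofReal_pow, ← Complex.ofReal_mul]
  simp
  exact_mod_cast Complex.ofReal_re _

def Kker {N : ℕ} (β : ℂ) (lam : ℝ) (x ξ : Esp N) (τ : ℝ) : ℂ :=
  Complex.exp (((-2 * Real.pi * inner ℝ ξ x : ℝ) : ℂ) * Complex.I + (β - 1) * (Real.log τ : ℝ) - cxi lam ξ * τ
    - (Real.pi * ‖ξ‖ ^ 2 : ℝ))

lemma Kker_norm {N : ℕ} {β : ℂ} {lam b : ℝ} (hβ : β.re = b) (x ξ : Esp N) {τ : ℝ} (hτ : 0 < τ) :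
    ‖Kker β lam x ξ τ‖ = Real.exp (-Real.pi * ‖ξ‖ ^ 2) * (τ ^ (b - 1) * Real.exp (-lam * τ)) := by
  rw [Kker, Complex.norm_exp, Real.rpow_def_of_pos hτ, ← Real.exp_add, ← Real.exp_add]
  congr 1
  rw [Complex.sub_re, Complex.sub_re, Complex.add_re, Complex.re_ofReal_mul, Complex.re_mul_ofReal, Complex.re_mul_ofReal,
    cxi_re, Complex.ofReal_re, Complex.sub_re, hβ]
  simp
  ring

lemma Kker_inner {N : ℕ} {β : ℂ} {lam : ℝ} (x : Esp N) {τ : ℝ} :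
    ∫ ξ, Kker β lam x ξ τ = Jf N β lam ‖x‖ τ := by
  set ζ : ℂ := 1 - (τ : ℂ) * Complex.I with hζ
  have hζre : 0 < ((Real.pi : ℂ) * ζ).re := by rw [Complex.re_ofReal_mul]; simp [hζ, Real.pi_pos]
  have hζ0 : ζ ≠ 0 := Complex.slitPlane_ne_zero (slit_aux τ)
  have hpi0 : (Real.pi : ℂ) ≠ 0 := by exact_mod_cast Real.pi_ne_zero
  have h := fourier_gaussian_innerProductSpace (V := Esp N) hζre x
  rw [Real.fourier_eq'] at h
  have e1 : ∀ ξ, Kker β lam x ξ τ = Complex.exp ((β - 1) * (Real.log τ : ℝ) - (lam * τ : ℝ) - (Real.pi * τ : ℝ) * Complex.I)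
      * (Complex.exp (((-2 * Real.pi * inner ℝ ξ x : ℝ) : ℂ) * Complex.I) • Complex.exp (-(Real.pi * ζ) * ‖ξ‖ ^ 2)) := by
    intro ξ
    rw [Kker, cxi, smul_eq_mul, ← Complex.exp_add, ← Complex.exp_add]
    congr 1
    rw [hζ]; push_cast; ring
  simp only [e1]
  rw [integral_const_mul, h, Jf]
  have e2 : (Real.pi : ℂ) / (Real.pi * ζ) = ζ⁻¹ := by field_simp
  rw [e2, Complex.cpow_def_of_ne_zero (inv_ne_zero hζ0), Complex.log_inv _ (Complex.slitPlane_arg_ne_pi (slit_aux τ)),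
    ← Complex.exp_add, ← Complex.exp_add]
  congr 1
  rw [finrank_euclideanSpace_fin]
  have h2 : (1 + (τ : ℂ) ^ 2) ≠ 0 := by
    have : (1 + τ ^ 2) ≠ 0 := by positivity
    exact_mod_cast this
  have e3 : -(Real.pi : ℂ) ^ 2 * ‖x‖ ^ 2 / (Real.pi * ζ) = - (((Real.pi * ‖x‖ ^ 2 / (1 + τ ^ 2) : ℝ) : ℂ) * (1 + τ * Complex.I)) := by
    have : (1 + (τ : ℂ) * Complex.I) * ζ = 1 + (τ : ℂ) ^ 2 := by
      rw [hζ]; linear_combination (-(τ : ℂ) ^ 2) * Complex.I_sq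
    push_cast
    field_simp
    linear_combination ((‖x‖ : ℂ) ^ 2) * this
  rw [e3]
  ring

lemma low_fourier {N : ℕ} {β : ℂ} {lam b : ℝ} (hb : 0 < b) (hβ : β.re = b) (hl : 0 < lam) (x : Esp N) :
    𝓕 (fun ξ : Esp N => Complex.Gamma (β + 1) * (cxi lam ξ) ^ (-β) * (Real.exp (-Real.pi * ‖ξ‖ ^ 2) : ℝ)) x
      = β * ∫ τ in Set.Ioi (0 : ℝ), Jf N β lam ‖x‖ τ := by
  have hβ0 : β ≠ 0 := by rintro rfl; simp at hβ; linarith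
  have hβre : 0 < β.re := by rw [hβ]; exact hb
  rw [Real.fourier_eq']
  have e1 : ∀ ξ : Esp N, Complex.exp (((-2 * Real.pi * inner ℝ ξ x : ℝ) : ℂ) * Complex.I) •
      (Complex.Gamma (β + 1) * (cxi lam ξ) ^ (-β) * (Real.exp (-Real.pi * ‖ξ‖ ^ 2) : ℝ)) =
      β * ∫ τ in Set.Ioi (0 : ℝ), Kker β lam x ξ τ := by
    intro ξ
    have h := gammaC hβre (c := cxi lam ξ) (by rw [cxi_re]; exact hl)
    have h2 : ∫ τ in Set.Ioi (0 : ℝ), Kker β lam x ξ τ =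
        (Complex.exp (((-2 * Real.pi * inner ℝ ξ x : ℝ) : ℂ) * Complex.I) * (Real.exp (-Real.pi * ‖ξ‖ ^ 2) : ℝ)) *
          ∫ t in Set.Ioi (0 : ℝ), (t : ℂ) ^ (β - 1) * Complex.exp (-(cxi lam ξ * t)) := by
      rw [← integral_const_mul]
      refine setIntegral_congr_fun measurableSet_Ioi (fun τ hτ => ?_)
      have hτ0 : (0 : ℝ) < τ := hτ
      have : (τ : ℂ) ≠ 0 := by exact_mod_cast hτ0.ne'
      rw [Complex.cpow_def_of_ne_zero this, ← Complex.ofReal_log hτ0.le, Complex.ofReal_exp, ← Complex.exp_add,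
        ← Complex.exp_add, ← Complex.exp_add, Kker]
      congr 1
      push_cast; ring
    rw [h2, h, Complex.Gamma_add_one _ hβ0, smul_eq_mul]
    ring
  simp only [e1]
  rw [integral_const_mul, integral_integral_swap]
  · simp only [Kker_inner]
  · have hg := (integrable_gauss_norm N).mul_prod (ν := volume.restrict (Set.Ioi (0 : ℝ)))
      (g := fun τ : ℝ => τ ^ (b - 1) * Real.exp (-lam * τ)) (by
        have := integrableOn_rpow_mul_exp_neg_mul_rpow (s := b - 1) (p := 1) (b := lam) (by linarith) one_pos hl
        simpa using! this)
    refine hg.mono' ?_ ?_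
    · apply Measurable.aestronglyMeasurable
      simp only [Function.uncurry_def, Kker, cxi]
      have h0 : Measurable (fun p : Esp N × ℝ => (inner ℝ p.1 x : ℝ)) := by fun_prop
      fun_prop
    · have : ∀ᵐ p ∂((volume : Measure (Esp N)).prod (volume.restrict (Set.Ioi (0 : ℝ)))), p.2 ∈ Set.Ioi (0 : ℝ) :=
        Measure.quasiMeasurePreserving_snd.ae (ae_restrict_mem measurableSet_Ioi)
      filter_upwards [this] with p hp
      exact (Kker_norm hβ x p.1 hp).le

end part9

section part10

open scoped FourierTransform ENNReal NNReal

lemma cxi_slit {N : ℕ} {lam : ℝ} (hl : 0 < lam) (ξ : Esp N) : cxi lam ξ ∈ Complex.slitPlane := by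
  left; rw [cxi_re]; exact hl

lemma cxi_norm_ge {N : ℕ} {lam : ℝ} (ξ : Esp N) : lam ≤ ‖cxi lam ξ‖ := by
  have := Complex.re_le_norm (cxi lam ξ)
  rwa [cxi_re] at this

lemma cpow_re_ge {c : ℂ} (hc : 0 < c.re) {a : ℝ} (ha0 : 0 ≤ a) (ha1 : a ≤ 1) :
    c.re * ‖c‖ ^ (-(1 + a)) ≤ (c ^ (-(a : ℂ))).re := by
  have hc0 : c ≠ 0 := by rintro rfl; simp at hc
  have hn : 0 < ‖c‖ := norm_pos_iff.2 hc0
  have e1 : (c ^ (-(a : ℂ))).re = ‖c‖ ^ (-a) * Real.cos (a * |c.arg|) := by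
    rw [Complex.cpow_def_of_ne_zero hc0, ← Complex.ofReal_neg, Complex.exp_re, Complex.re_mul_ofReal, Complex.im_mul_ofReal,
      Complex.log_re, Complex.log_im, Real.rpow_def_of_pos hn]
    congr 1
    rw [← Real.cos_abs, abs_mul, abs_neg, abs_of_nonneg ha0, mul_comm]
  have e2 : c.re = ‖c‖ * Real.cos |c.arg| := by
    rw [Real.cos_abs, Complex.cos_arg hc0]; field_simp
  have e3 : ‖c‖ ^ (-(1 + a)) = ‖c‖⁻¹ * ‖c‖ ^ (-a) := by
    rw [neg_add, Real.rpow_add hn, Real.rpow_neg_one]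
  have hcos : Real.cos |c.arg| ≤ Real.cos (a * |c.arg|) := by
    apply Real.cos_le_cos_of_nonneg_of_le_pi (by positivity) (Complex.abs_arg_le_pi c)
    exact mul_le_of_le_one_left (abs_nonneg _) ha1
  rw [e1, e3, e2]
  calc ‖c‖ * Real.cos |c.arg| * (‖c‖⁻¹ * ‖c‖ ^ (-a)) = ‖c‖ ^ (-a) * Real.cos |c.arg| := by field_simp
    _ ≤ _ := by gcongr

def lowm {N : ℕ} (θ b lam : ℝ) (z : ℂ) (ξ : Esp N) : ℂ :=
  Complex.exp ((z - θ) ^ 2) * (Complex.Gamma ((b : ℂ) * z + 1) * (cxi lam ξ) ^ (-((b : ℂ) * z)) * (Real.exp (-Real.pi * ‖ξ‖ ^ 2) : ℝ))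

lemma exp_sq_norm {θ : ℝ} (hθ0 : 0 < θ) (hθ1 : θ < 1) {z : ℂ} (h0 : 0 ≤ z.re) (h1 : z.re ≤ 1) :
    ‖Complex.exp ((z - θ) ^ 2)‖ ≤ Real.exp (1 - z.im ^ 2) := by
  rw [Complex.norm_exp]
  apply Real.exp_le_exp.2
  have : ((z - θ) ^ 2).re = (z.re - θ) ^ 2 - z.im ^ 2 := by
    rw [pow_two, Complex.mul_re]; simp; ring
  rw [this]
  nlinarith

lemma cpow_norm_le {c : ℂ} {lam b : ℝ} (hl : 0 < lam) (hc : lam ≤ ‖c‖) (hb : 0 < b) {z : ℂ} (h0 : 0 ≤ z.re) :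
    ‖c ^ (-((b : ℂ) * z))‖ ≤ lam ^ (-(b * z.re)) * Real.exp (4 * b * |z.im|) := by
  have hc0 : c ≠ 0 := norm_pos_iff.1 (hl.trans_le hc)
  rw [Complex.norm_cpow_of_ne_zero hc0, Complex.neg_re, Complex.neg_im, Complex.re_ofReal_mul, Complex.im_ofReal_mul,
    div_eq_mul_inv, ← Real.exp_neg]
  have h1 : ‖c‖ ^ (-(b * z.re)) ≤ lam ^ (-(b * z.re)) :=
    Real.rpow_le_rpow_of_nonpos hl hc (by nlinarith)
  gcongr
  have h2 := Complex.abs_arg_le_pi c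
  have h3 := Real.pi_lt_four
  calc -(c.arg * -(b * z.im)) = b * (c.arg * z.im) := by ring
    _ ≤ b * (4 * |z.im|) := by
        have h4 : c.arg * z.im ≤ 4 * |z.im| := by
          refine (le_abs_self _).trans ?_
          rw [abs_mul]
          exact mul_le_mul_of_nonneg_right (by linarith) (abs_nonneg _)
        exact mul_le_mul_of_nonneg_left h4 hb.le
    _ = _ := by ring

lemma lowm_cont {N : ℕ} (θ b : ℝ) {lam : ℝ} (hl : 0 < lam) (z : ℂ) : Continuous (lowm (N := N) θ b lam z) := by
  have h1 : Continuous (fun ξ : Esp N => cxi lam ξ) := by unfold cxi; fun_prop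
  have h2 : Continuous (fun ξ : Esp N => (cxi lam ξ) ^ (-((b : ℂ) * z))) :=
    h1.cpow continuous_const (fun ξ => cxi_slit hl ξ)
  unfold lowm
  fun_prop

lemma lowm_norm {N : ℕ} {θ b lam G : ℝ} (hθ0 : 0 < θ) (hθ1 : θ < 1) (hb : 0 < b) (hl : 0 < lam)
    (hG : ∀ x ∈ Set.Icc (0 : ℝ) 1, Real.Gamma (b * x + 1) ≤ G) {z : ℂ} (h0 : 0 ≤ z.re) (h1 : z.re ≤ 1) (ξ : Esp N) :
    ‖lowm θ b lam z ξ‖ ≤ Real.exp (1 + 4 * b ^ 2) * G * lam ^ (-(b * z.re)) * Real.exp (-Real.pi * ‖ξ‖ ^ 2) := by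
  have hg : ‖Complex.Gamma ((b : ℂ) * z + 1)‖ ≤ G := by
    have e : ((b : ℂ) * z + 1).re = b * z.re + 1 := by rw [Complex.add_re, Complex.re_ofReal_mul]; simp
    refine (norm_Gamma_le (by rw [e]; positivity)).trans ?_
    rw [e]; exact hG _ ⟨h0, h1⟩
  have hG0 : 0 ≤ G := (norm_nonneg _).trans hg
  rw [lowm, norm_mul, norm_mul, norm_mul, Complex.norm_real, Real.norm_eq_abs, abs_of_pos (Real.exp_pos _)]
  have he : Real.exp (1 - z.im ^ 2) * Real.exp (4 * b * |z.im|) ≤ Real.exp (1 + 4 * b ^ 2) := by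
    rw [← Real.exp_add]
    apply Real.exp_le_exp.2
    nlinarith [sq_nonneg (|z.im| - 2 * b), sq_abs z.im]
  calc _ ≤ Real.exp (1 - z.im ^ 2) * (G * (lam ^ (-(b * z.re)) * Real.exp (4 * b * |z.im|)) * Real.exp (-Real.pi * ‖ξ‖ ^ 2)) := by
        have := exp_sq_norm hθ0 hθ1 h0 h1
        have := cpow_norm_le hl (cxi_norm_ge ξ) hb h0
        gcongr
    _ = (Real.exp (1 - z.im ^ 2) * Real.exp (4 * b * |z.im|)) * G * lam ^ (-(b * z.re)) * Real.exp (-Real.pi * ‖ξ‖ ^ 2) := by ring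
    _ ≤ _ := by gcongr

lemma gauss_le_one {N : ℕ} (ξ : Esp N) : Real.exp (-Real.pi * ‖ξ‖ ^ 2) ≤ 1 := by
  rw [Real.exp_le_one_iff]
  have := Real.pi_pos
  nlinarith [sq_nonneg ‖ξ‖, mul_nonneg this.le (sq_nonneg ‖ξ‖)]

lemma lowm_fourier {N : ℕ} {θ b lam : ℝ} (hθ0 : 0 < θ) (hθ1 : θ < 1) (hb : 0 < b) (hbN : 2 * b ≤ N + 1) (hl : 0 < lam)
    {z : ℂ} (hz : z.re = 1) (x : Esp N) :
    ‖𝓕 (lowm (N := N) θ b lam z) x‖ ≤ Real.exp 1 * b * (1 / b + 2 * (11 + 4 * (2 * b + 1 + N + 12)) + 16 * b) * 2 := by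
  set β : ℂ := (b : ℂ) * z with hβ
  have hβre : β.re = b := by rw [hβ, Complex.re_ofReal_mul, hz, mul_one]
  have e : 𝓕 (lowm (N := N) θ b lam z) x = Complex.exp ((z - θ) ^ 2) * (β * ∫ τ in Set.Ioi (0 : ℝ), Jf N β lam ‖x‖ τ) := by
    rw [← low_fourier hb hβre hl x, Real.fourier_eq, Real.fourier_eq, ← integral_const_mul]
    congr 1; ext ξ
    simp only [Circle.smul_def, smul_eq_mul, lowm]; ring
  have hzn : ‖z‖ ≤ 1 + |z.im| := by
    have := Complex.norm_le_abs_re_add_abs_im z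
    rwa [hz, abs_one] at this
  have hβn : ‖β‖ ≤ b * (1 + |z.im|) := by
    rw [hβ, norm_mul, Complex.norm_real, Real.norm_eq_abs, abs_of_pos hb]; gcongr
  have hβn2 : ‖2 * β - 1‖ ≤ 2 * (b * (1 + |z.im|)) + 1 := by
    refine (norm_sub_le _ _).trans ?_
    rw [norm_mul, Complex.norm_ofNat, norm_one]; gcongr
  have hJ := J_bound (N := N) (lam := lam) (r := ‖x‖) hb hβre hbN hl.le (norm_nonneg _)
  have hE := exp_sq_norm hθ0 hθ1 (z := z) (by rw [hz]; norm_num) hz.le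
  set y := |z.im| with hy
  have hy0 : 0 ≤ y := abs_nonneg _
  have hyy : z.im ^ 2 = y ^ 2 := (sq_abs _).symm
  set K := 1 / b + 2 * (11 + 4 * (2 * b + 1 + N + 12)) with hK
  have hK0 : 0 < K := by rw [hK]; positivity
  have hJ2 : ‖∫ τ in Set.Ioi (0 : ℝ), Jf N β lam ‖x‖ τ‖ ≤ (K + 16 * b) * (1 + y) := by
    refine hJ.trans ?_
    have : 1 / b + 2 * (11 + 4 * (‖2 * β - 1‖ + N + 12)) ≤ K + 16 * b * y := by
      rw [hK]; linarith
    refine this.trans ?_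
    nlinarith [mul_nonneg hK0.le hy0]
  rw [e, norm_mul, norm_mul]
  have hexp : Real.exp (1 - y ^ 2) * (1 + y) ^ 2 ≤ Real.exp 1 * 2 := by
    have h1 := Real.add_one_le_exp (y ^ 2)
    have h2 : Real.exp (1 - y ^ 2) * Real.exp (y ^ 2) = Real.exp 1 := by rw [← Real.exp_add]; simp
    calc Real.exp (1 - y ^ 2) * (1 + y) ^ 2 ≤ Real.exp (1 - y ^ 2) * (2 * Real.exp (y ^ 2)) := by
          gcongr; nlinarith [sq_nonneg (y - 1)]
      _ = Real.exp 1 * 2 := by rw [← h2]; ring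
  rw [hyy] at hE
  calc _ ≤ Real.exp (1 - y ^ 2) * (b * (1 + y) * ((K + 16 * b) * (1 + y))) := by gcongr
    _ = (Real.exp (1 - y ^ 2) * (1 + y) ^ 2) * (b * (K + 16 * b)) := by ring
    _ ≤ (Real.exp 1 * 2) * (b * (K + 16 * b)) := by gcongr
    _ = _ := by ring

open Complex.HadamardThreeLines in
lemma lowQ {N : ℕ} {θ q a : ℝ} (hθ0 : 0 < θ) (hθ1 : θ < 1) (hq0 : 0 < q) (hq : q * (1 + θ) / 2 = 1)
    (ha0 : 0 < a) (ha1 : a ≤ 1) (haN : 2 * (a / θ) ≤ N + 1) :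
    ∃ C : ℝ, 0 ≤ C ∧ ∀ lam : ℝ, 0 < lam → ∀ f : SimpleFunc (Esp N) ℂ, Integrable f →
      ∫ ξ, (Real.exp (-Real.pi * ‖ξ‖ ^ 2) * (lam * ‖cxi lam ξ‖ ^ (-(1 + a)))) * ‖𝓕 (⇑f) ξ‖ ^ 2
        ≤ C * (∫ x, ‖f x‖ ^ q) ^ (2 / q) := by
  set b := a / θ with hbd
  have hb : 0 < b := by positivity
  obtain ⟨G, hG⟩ : ∃ G, ∀ x ∈ Set.Icc (0 : ℝ) 1, Real.Gamma (b * x + 1) ≤ G := by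
    have hc : ContinuousOn (fun x : ℝ => Real.Gamma (b * x + 1)) (Set.Icc 0 1) := by
      intro x hx
      have : ContinuousAt Real.Gamma (b * x + 1) := by
        apply DifferentiableAt.continuousAt (𝕜 := ℝ)
        apply Real.differentiableAt_Gamma
        intro m h
        have h1 : 0 ≤ b * x := mul_nonneg hb.le hx.1
        have h2 : (0 : ℝ) ≤ m := Nat.cast_nonneg m
        linarith
      exact (ContinuousAt.comp (f := fun x => b * x + 1) this (by fun_prop)).continuousWithinAt
    obtain ⟨G, hG⟩ := isCompact_Icc.exists_bound_of_continuousOn hc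
    exact ⟨G, fun x hx => (le_abs_self _).trans (hG x hx)⟩
  have hG0 : 0 ≤ G := (Real.Gamma_pos_of_pos (by norm_num)).le.trans (hG 0 (by simp))
  set M1 := Real.exp (1 + 4 * b ^ 2) * G with hM1
  set M2 := Real.exp 1 * b * (1 / b + 2 * (11 + 4 * (2 * b + 1 + N + 12)) + 16 * b) * 2 with hM2
  have hM1' : 0 ≤ M1 := by positivity
  have hM2' : 0 ≤ M2 := by positivity
  have hΓ : 0 < Real.Gamma (a + 1) := Real.Gamma_pos_of_pos (by linarith)
  refine ⟨(M1 + M2) / Real.Gamma (a + 1), by positivity, fun lam hl f hf => ?_⟩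
  have hstrip : ∀ z : ℂ, 0 ≤ z.re → z.re ≤ 1 → ∀ ξ : Esp N, ‖lowm θ b lam z ξ‖ ≤ M1 * (1 + lam ^ (-b)) * Real.exp (-Real.pi * ‖ξ‖ ^ 2) := by
    intro z h0 h1 ξ
    refine (lowm_norm hθ0 hθ1 hb hl hG h0 h1 ξ).trans ?_
    gcongr M1 * ?_ * _
    rcases le_total 1 lam with h | h
    · have := Real.rpow_le_one_of_one_le_of_nonpos h (by nlinarith : -(b * z.re) ≤ 0)
      have : 0 ≤ lam ^ (-b) := by positivity
      linarith
    · have := Real.rpow_le_rpow_of_exponent_ge hl h (by nlinarith : -b ≤ -(b * z.re))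
      linarith
  have hstrip2 : ∀ z : ℂ, 0 ≤ z.re → z.re ≤ 1 → ∀ ξ : Esp N, ‖lowm θ b lam z ξ‖ ≤ M1 * (1 + lam ^ (-b)) := by
    intro z h0 h1 ξ
    refine (hstrip z h0 h1 ξ).trans ?_
    exact mul_le_of_le_one_right (by positivity) (gauss_le_one ξ)
  have hst := steinQ (m := lowm θ b lam) (M := M1 + M2) (Bd := M1 * (1 + lam ^ (-b))) hθ0 hθ1 hq0 hq
    (fun z _ => (lowm_cont θ b hl z).aestronglyMeasurable) (fun ξ z hz => ?_)
    (fun z hz ξ => ?_) (fun z hz ξ => ?_) (fun z hz => ⟨?_, fun x => ?_⟩) hf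
  · have hf2 : MemLp f 2 (volume : Measure (Esp N)) :=
      (SimpleFunc.memLp_iff_integrable (by norm_num) (by norm_num)).2 hf
    have hF : Integrable (fun ξ => ‖𝓕 (⇑f) ξ‖ ^ 2) := (fourier_L1_L2 hf hf2).1.integrable_norm_pow (by norm_num)
    have hint : Integrable (fun ξ => (lowm θ b lam θ ξ).re * ‖𝓕 (⇑f) ξ‖ ^ 2) := by
      refine Integrable.bdd_mul (c := M1 * (1 + lam ^ (-b))) hF
        (Complex.continuous_re.comp (lowm_cont θ b hl θ)).aestronglyMeasurable ?_
      filter_upwards with ξ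
      refine (Complex.abs_re_le_norm _).trans (hstrip2 _ ?_ ?_ ξ)
      · simpa using hθ0.le
      · simpa using hθ1.le
    rw [div_mul_eq_mul_div, le_div_iff₀ hΓ, mul_comm, ← integral_const_mul]
    refine le_trans (integral_mono_of_nonneg ?_ hint ?_) hst
    · filter_upwards with ξ
      simp only [Pi.zero_apply]
      positivity
    · filter_upwards with ξ
      have hbθ : (b : ℂ) * (θ : ℂ) = (a : ℂ) := by
        rw [hbd]; push_cast
        have : (θ : ℂ) ≠ 0 := by exact_mod_cast hθ0.ne'
        field_simp
      have e1 : (lowm θ b lam θ ξ).re = Real.Gamma (a + 1) * Real.exp (-Real.pi * ‖ξ‖ ^ 2) * (cxi lam ξ ^ (-(a : ℂ))).re := by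
        rw [lowm, hbθ, sub_self, zero_pow two_ne_zero, Complex.exp_zero, one_mul, Complex.re_mul_ofReal]
        have : (a : ℂ) + 1 = ((a + 1 : ℝ) : ℂ) := by push_cast; rfl
        rw [this, Complex.Gamma_ofReal, Complex.re_ofReal_mul]
        ring
      have h5 := cpow_re_ge (c := cxi lam ξ) (by rw [cxi_re]; exact hl) ha0.le ha1
      rw [cxi_re] at h5
      rw [e1]
      have h6 : 0 ≤ Real.Gamma (a + 1) * Real.exp (-Real.pi * ‖ξ‖ ^ 2) * ‖𝓕 (⇑f) ξ‖ ^ 2 := by positivity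
      calc _ = (Real.Gamma (a + 1) * Real.exp (-Real.pi * ‖ξ‖ ^ 2) * ‖𝓕 (⇑f) ξ‖ ^ 2) * (lam * ‖cxi lam ξ‖ ^ (-(1 + a))) := by ring
        _ ≤ _ := mul_le_mul_of_nonneg_left h5 h6
        _ = _ := by ring
  · rw [verticalClosedStrip, Set.mem_preimage, Set.mem_Icc] at hz
    unfold lowm
    have h1 : DifferentiableAt ℂ (fun z : ℂ => Complex.Gamma ((b : ℂ) * z + 1)) z := by
      have : DifferentiableAt ℂ Complex.Gamma ((b : ℂ) * z + 1) := by
        apply Complex.differentiableAt_Gamma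
        intro m h
        have h1 := congrArg Complex.re h
        rw [Complex.add_re, Complex.re_ofReal_mul] at h1
        simp at h1
        have h2 : 0 ≤ b * z.re := mul_nonneg hb.le hz.1
        have h3 : (0 : ℝ) ≤ m := Nat.cast_nonneg m
        linarith
      exact DifferentiableAt.comp z this (by fun_prop)
    have h2 : DifferentiableAt ℂ (fun z : ℂ => cxi lam ξ ^ (-((b : ℂ) * z))) z := by
      refine DifferentiableAt.const_cpow (by fun_prop) (Or.inl ?_)
      exact Complex.slitPlane_ne_zero (cxi_slit hl ξ)
    fun_prop
  · rw [verticalClosedStrip, Set.mem_preimage, Set.mem_Icc] at hz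
    exact hstrip2 z hz.1 hz.2 ξ
  · have := lowm_norm hθ0 hθ1 hb hl hG (z := z) hz.ge (by rw [hz]; norm_num) ξ
    rw [hz, mul_zero, neg_zero, Real.rpow_zero, mul_one] at this
    refine this.trans ?_
    have h2 : Real.exp (1 + 4 * b ^ 2) * G * Real.exp (-Real.pi * ‖ξ‖ ^ 2) ≤ M1 := mul_le_of_le_one_right hM1' (gauss_le_one ξ)
    linarith
  · refine ((integrable_gauss_norm N).const_mul (M1 * (1 + lam ^ (-b)))).mono' (lowm_cont θ b hl z).aestronglyMeasurable ?_
    filter_upwards with ξ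
    exact hstrip z (by rw [hz]; norm_num) hz.le ξ
  · exact (lowm_fourier hθ0 hθ1 hb haN hl hz x).trans (by linarith)

end part10

section part11

open scoped FourierTransform ENNReal NNReal

lemma rpow_sub_one_ge {s r : ℝ} (hs : 0 < s) (h0 : 0 ≤ r) (h2 : r ≤ 2) :
    min 1 s / 2 * |r - 1| ≤ |r ^ s - 1| := by
  have hm : 0 < min 1 s := lt_min one_pos hs
  have hm1 : min 1 s ≤ 1 := min_le_left _ _
  have hms : min 1 s ≤ s := min_le_right _ _
  rcases le_total r 1 with h | h
  · have h1 : r ^ s ≤ 1 := Real.rpow_le_one h0 h hs.le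
    rw [abs_of_nonpos (by linarith), abs_of_nonpos (by linarith)]
    have key : min 1 s * (1 - r) ≤ 1 - r ^ s := by
      rcases le_total 1 s with hs1 | hs1
      · have : r ^ s ≤ r := by
          rcases h0.eq_or_lt with rfl | hr
          · rw [Real.zero_rpow hs.ne']
          · calc r ^ s ≤ r ^ (1 : ℝ) := Real.rpow_le_rpow_of_exponent_ge hr h hs1
              _ = r := Real.rpow_one r
        nlinarith
      · have := rpow_one_add_le_one_add_mul_self (s := r - 1) (by linarith) hs.le hs1
        rw [add_sub_cancel] at this
        nlinarith
    nlinarith [mul_nonneg hm.le (sub_nonneg.2 h)]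
  · have hr : 0 < r := by linarith
    have h1 : 1 ≤ r ^ s := Real.one_le_rpow h hs.le
    rw [abs_of_nonneg (by linarith), abs_of_nonneg (by linarith)]
    have h3 : 1 + s * Real.log r ≤ r ^ s := by
      rw [Real.rpow_def_of_pos hr]
      have := Real.add_one_le_exp (Real.log r * s)
      linarith
    have h4 := Real.one_sub_inv_le_log_of_pos hr
    have h5 : (r - 1) / 2 ≤ 1 - r⁻¹ := by
      have : 1 - r⁻¹ = (r - 1) / r := by field_simp
      rw [this]
      exact div_le_div_of_nonneg_left (by linarith) hr h2
    have h6 : 0 ≤ (r - 1) / 2 := by linarith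
    have : min 1 s * ((r - 1) / 2) ≤ s * Real.log r := mul_le_mul hms (h5.trans h4) h6 hs.le
    linarith

lemma cxi_norm_sq {N : ℕ} (lam : ℝ) (ξ : Esp N) : ‖cxi lam ξ‖ ^ 2 = lam ^ 2 + (Real.pi * (‖ξ‖ ^ 2 - 1)) ^ 2 := by
  rw [← Complex.normSq_eq_norm_sq, Complex.normSq_apply]
  have : (cxi lam ξ).im = -(Real.pi * (‖ξ‖ ^ 2 - 1)) := by
    unfold cxi; simp [-Complex.ofReal_mul, -Complex.ofReal_sub, -Complex.ofReal_pow]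
  rw [cxi_re, this]; ring

def wlow {N : ℕ} (a lam : ℝ) (ξ : Esp N) : ℝ := Real.exp (-Real.pi * ‖ξ‖ ^ 2) * (lam * ‖cxi lam ξ‖ ^ (-(1 + a)))
def whigh {N : ℕ} (s : ℝ) (ξ : Esp N) : ℝ := (1 + ‖ξ‖ ^ 2) ^ (-s)

lemma weight_low {s a : ℝ} (hs : 0 < s) (ha1 : a ≤ 1) : ∃ C : ℝ, 0 < C ∧ ∀ (N : ℕ) (lam : ℝ), 0 < lam →
    ∀ ξ : Esp N, ‖ξ‖ ≤ 2 → 1 ≤ C * (lam ^ a + lam ^ (a - 2) * (‖ξ‖ ^ s - 1) ^ 2) * wlow a lam ξ := by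
  set m := min 1 s / 2 with hm
  have hm0 : 0 < m := by have : 0 < min 1 s := lt_min one_pos hs
                         positivity
  set K := Real.pi * 3 / m with hK
  refine ⟨(1 + K ^ 2) * Real.exp (Real.pi * 4), by positivity, fun N lam hl ξ hξ => ?_⟩
  set t := ‖ξ‖ ^ s - 1 with ht
  set n := ‖cxi lam ξ‖ with hn
  have hln : lam ≤ n := cxi_norm_ge ξ
  have hn0 : 0 < n := hl.trans_le hln
  have h1 : |Real.pi * (‖ξ‖ ^ 2 - 1)| ≤ K * |t| := by
    have h := rpow_sub_one_ge hs (norm_nonneg ξ) hξ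
    have e : ‖ξ‖ ^ 2 - 1 = (‖ξ‖ - 1) * (‖ξ‖ + 1) := by ring
    rw [abs_mul, e, abs_mul, abs_of_pos Real.pi_pos, abs_of_nonneg (by positivity : 0 ≤ ‖ξ‖ + 1)]
    calc Real.pi * (|‖ξ‖ - 1| * (‖ξ‖ + 1)) ≤ Real.pi * (|‖ξ‖ - 1| * 3) := by gcongr; linarith
      _ = K * (m * |‖ξ‖ - 1|) := by rw [hK]; field_simp
      _ ≤ K * |t| := by gcongr
  have h2 : n ^ 2 ≤ (1 + K ^ 2) * (lam ^ 2 + t ^ 2) := by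
    rw [hn, cxi_norm_sq, ← sq_abs (Real.pi * _)]
    have : |Real.pi * (‖ξ‖ ^ 2 - 1)| ^ 2 ≤ K ^ 2 * t ^ 2 := by
      rw [← sq_abs t, ← mul_pow]; gcongr
    nlinarith [mul_nonneg (sq_nonneg K) (sq_nonneg lam), sq_nonneg t]
  have h3 : lam ^ (1 - a) ≤ n ^ (1 - a) := Real.rpow_le_rpow hl.le hln (by linarith)
  have e1 : n ^ (-(1 + a)) = n ^ (1 - a) / n ^ 2 := by
    rw [← Real.rpow_two, ← Real.rpow_sub hn0]; congr 1; ring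
  have e2 : lam ^ a + lam ^ (a - 2) * t ^ 2 = lam ^ (a - 2) * (lam ^ 2 + t ^ 2) := by
    rw [mul_add, ← Real.rpow_two lam, ← Real.rpow_add hl]; congr 2; ring
  have e3 : lam ^ (a - 2) * lam * lam ^ (1 - a) = 1 := by
    nth_rewrite 2 [← Real.rpow_one lam]
    rw [← Real.rpow_add hl, ← Real.rpow_add hl]
    ring_nf; simp
  have h4 : Real.exp (-(Real.pi * 4)) ≤ Real.exp (-Real.pi * ‖ξ‖ ^ 2) := by
    apply Real.exp_le_exp.2
    have : ‖ξ‖ ^ 2 ≤ 4 := by nlinarith [norm_nonneg ξ]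
    nlinarith [Real.pi_pos]
  unfold wlow
  rw [← hn, e1, e2]
  calc (1 : ℝ) = (Real.exp (Real.pi * 4) * Real.exp (-(Real.pi * 4))) * (n ^ 2 / n ^ 2) * (lam ^ (a - 2) * lam * lam ^ (1 - a)) := by
        rw [e3, ← Real.exp_add, div_self (by positivity)]; simp
    _ ≤ (Real.exp (Real.pi * 4) * Real.exp (-Real.pi * ‖ξ‖ ^ 2)) * (((1 + K ^ 2) * (lam ^ 2 + t ^ 2)) / n ^ 2) * (lam ^ (a - 2) * lam * n ^ (1 - a)) := by
        gcongr
    _ = _ := by ring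

lemma weight_high {s a R : ℝ} (hs : 0 < s) (ha1 : a ≤ 1) (hR : 0 < R) : ∃ C : ℝ, 0 < C ∧ ∀ (N : ℕ) (lam : ℝ), 0 < lam → lam ≤ R →
    ∀ ξ : Esp N, 2 ≤ ‖ξ‖ → 1 ≤ C * (lam ^ a + lam ^ (a - 2) * (‖ξ‖ ^ s - 1) ^ 2) * whigh s ξ := by
  set δ := 1 - (2 : ℝ) ^ (-s) with hδ
  have hδ0 : 0 < δ := by
    have : (2 : ℝ) ^ (-s) < 1 := Real.rpow_lt_one_of_one_lt_of_neg (by norm_num) (by linarith)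
    rw [hδ]; linarith
  refine ⟨(R ^ (a - 2) * δ ^ 2 * 2 ^ (-s))⁻¹, by positivity, fun N lam hl hlR ξ hξ => ?_⟩
  set r := ‖ξ‖
  have hr : 0 < r := by linarith
  have h1 : R ^ (a - 2) ≤ lam ^ (a - 2) := Real.rpow_le_rpow_of_nonpos hl hlR (by linarith)
  have h2 : δ * r ^ s ≤ r ^ s - 1 := by
    have : 1 ≤ (2 : ℝ) ^ (-s) * r ^ s := by
      rw [Real.rpow_neg (by norm_num), ← div_eq_inv_mul, le_div_iff₀ (by positivity), one_mul]
      exact Real.rpow_le_rpow (by norm_num) hξ hs.le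
    rw [hδ]; linarith
  have h3 : (2 : ℝ) ^ (-s) * (r ^ s) ^ (-2 : ℝ) ≤ whigh s ξ := by
    unfold whigh
    rw [← Real.rpow_mul hr.le]
    have : (2 * r ^ 2) ^ (-s) ≤ (1 + r ^ 2) ^ (-s) := Real.rpow_le_rpow_of_nonpos (by positivity) (by nlinarith) (by linarith)
    refine le_trans (le_of_eq ?_) this
    rw [Real.mul_rpow (by norm_num) (by positivity), ← Real.rpow_two, ← Real.rpow_mul hr.le]
    ring_nf
  have e : (r ^ s) ^ 2 * (r ^ s) ^ (-2 : ℝ) = 1 := by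
    rw [← Real.rpow_two, ← Real.rpow_add (by positivity)]; norm_num
  rw [mul_assoc, ← div_eq_inv_mul, le_div_iff₀ (by positivity), one_mul]
  have hw : 0 ≤ whigh s ξ := by unfold whigh; positivity
  calc R ^ (a - 2) * δ ^ 2 * 2 ^ (-s) = R ^ (a - 2) * (δ * r ^ s) ^ 2 * (2 ^ (-s) * (r ^ s) ^ (-2 : ℝ)) := by
        rw [mul_pow]
        calc _ = R ^ (a - 2) * δ ^ 2 * 2 ^ (-s) * ((r ^ s) ^ 2 * (r ^ s) ^ (-2 : ℝ)) := by rw [e, mul_one]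
          _ = _ := by ring
    _ ≤ lam ^ (a - 2) * (r ^ s - 1) ^ 2 * whigh s ξ := by gcongr
    _ ≤ _ := by
        gcongr
        have : 0 ≤ lam ^ a := by positivity
        linarith

lemma weight {s a R : ℝ} (hs : 0 < s) (ha1 : a ≤ 1) (hR : 0 < R) : ∃ C : ℝ, 0 < C ∧ ∀ (N : ℕ) (lam : ℝ), 0 < lam → lam ≤ R →
    ∀ ξ : Esp N, 1 ≤ C * (lam ^ a + lam ^ (a - 2) * (‖ξ‖ ^ s - 1) ^ 2) * (wlow a lam ξ + whigh s ξ) := by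
  obtain ⟨C1, h1, H1⟩ := weight_low (a := a) hs ha1
  obtain ⟨C2, h2, H2⟩ := weight_high hs ha1 hR
  refine ⟨C1 + C2, by positivity, fun N lam hl hlR ξ => ?_⟩
  have hA : 0 ≤ lam ^ a + lam ^ (a - 2) * (‖ξ‖ ^ s - 1) ^ 2 := by positivity
  have hw : 0 ≤ whigh s ξ := by unfold whigh; positivity
  have hw' : 0 ≤ wlow a lam ξ := by unfold wlow; positivity
  set A := lam ^ a + lam ^ (a - 2) * (‖ξ‖ ^ s - 1) ^ 2
  have i1 : 0 ≤ C1 * A * whigh s ξ := by positivity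
  have i2 : 0 ≤ C2 * A * whigh s ξ := by positivity
  have i3 : 0 ≤ C1 * A * wlow a lam ξ := by positivity
  have i4 : 0 ≤ C2 * A * wlow a lam ξ := by positivity
  rcases le_total ‖ξ‖ 2 with h | h
  · have := H1 N lam hl ξ h
    linarith
  · have := H2 N lam hl hlR ξ h
    linarith

end part11

section part12

open scoped FourierTransform ENNReal NNReal

lemma dual_step {N : ℕ} {v : Esp N → ℂ} (hvm : StronglyMeasurable v) {p q K : ℝ} (hp : 2 < p) (hq : q * (p - 1) = p)
    (H : ∀ g : SimpleFunc (Esp N) ℂ, Integrable g → ∀ Y : ℝ, 0 < Y → ∫ x, ‖g x‖ ^ q ≤ Y ^ q →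
      ‖∫ x, v x * starRingEnd ℂ (g x)‖ ≤ K * Y)
    {A : Set (Esp N)} (hA : MeasurableSet A) (hAf : volume A < ⊤) {m : ℝ} (hm : 0 ≤ m) (hAm : ∀ x ∈ A, ‖v x‖ ≤ m) :
    ∫⁻ x in A, ‖v x‖ₑ ^ p ≤ ENNReal.ofReal ((2 * K) ^ p) := by
  have hq1 : 1 < q := by by_contra! h; nlinarith
  have hq0 : 0 < q := by linarith
  set g : Esp N → ℂ := A.indicator (fun x => ((‖v x‖ ^ (p - 2) : ℝ) : ℂ) * v x) with hg
  have hgm : StronglyMeasurable g := by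
    apply StronglyMeasurable.indicator _ hA
    have : Measurable (fun x => ‖v x‖ ^ (p - 2)) := hvm.norm.measurable.pow_const _
    exact (Complex.measurable_ofReal.comp this).stronglyMeasurable.mul hvm
  have hgn : ∀ x, ‖g x‖ = A.indicator (fun x => ‖v x‖ ^ (p - 1)) x := by
    intro x
    by_cases hx : x ∈ A
    · rw [hg, Set.indicator_of_mem hx, Set.indicator_of_mem hx, norm_mul, Complex.norm_real, Real.norm_eq_abs, abs_of_nonneg (by positivity)]
      nth_rewrite 2 [← Real.rpow_one ‖v x‖]
      rw [← Real.rpow_add' (norm_nonneg _) (by linarith)]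
      congr 1; ring
    · rw [hg, Set.indicator_of_notMem hx, Set.indicator_of_notMem hx, norm_zero]
  set c := m ^ (p - 1) with hc
  have hc0 : 0 ≤ c := by positivity
  have hgc : ∀ x, ‖g x‖ ≤ c := by
    intro x
    rw [hgn]
    by_cases hx : x ∈ A
    · rw [Set.indicator_of_mem hx]
      exact Real.rpow_le_rpow (norm_nonneg _) (hAm x hx) (by linarith)
    · rw [Set.indicator_of_notMem hx]; exact hc0
  set G : ℕ → SimpleFunc (Esp N) ℂ := fun k => (hgm.approxBounded c k).restrict A with hG
  have hGx : ∀ k x, G k x = A.indicator (hgm.approxBounded c k) x := fun k x => SimpleFunc.restrict_apply _ hA x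
  have hGn : ∀ k x, ‖G k x‖ ≤ A.indicator (fun _ => c) x := by
    intro k x
    rw [hGx]
    by_cases hx : x ∈ A
    · rw [Set.indicator_of_mem hx, Set.indicator_of_mem hx]
      exact hgm.norm_approxBounded_le hc0 k x
    · rw [Set.indicator_of_notMem hx, Set.indicator_of_notMem hx, norm_zero]
  have hGt : ∀ x, Tendsto (fun k => G k x) atTop (𝓝 (g x)) := by
    intro x
    simp only [hGx]
    by_cases hx : x ∈ A
    · simp only [Set.indicator_of_mem hx]
      exact hgm.tendsto_approxBounded_of_norm_le (hgc x)
    · simp only [Set.indicator_of_notMem hx, hg]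
      exact tendsto_const_nhds
  have hind : ∀ t : ℝ, Integrable (A.indicator (fun _ => t)) (volume : Measure (Esp N)) := by
    intro t
    rw [integrable_indicator_iff hA]
    exact integrableOn_const hAf.ne
  have hGi : ∀ k, Integrable (G k) := fun k =>
    (hind c).mono' (G k).stronglyMeasurable.aestronglyMeasurable (ae_of_all _ (hGn k))
  set I := ∫ x in A, ‖v x‖ ^ p with hI
  have hI0 : 0 ≤ I := by rw [hI]; positivity
  have hvp : IntegrableOn (fun x => ‖v x‖ ^ p) A := by
    rw [← integrable_indicator_iff hA]
    refine (hind (m ^ p)).mono' ((hvm.norm.measurable.pow_const p).indicator hA).aestronglyMeasurable (ae_of_all _ fun x => ?_)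
    by_cases hx : x ∈ A
    · rw [Set.indicator_of_mem hx, Set.indicator_of_mem hx, Real.norm_eq_abs, abs_of_nonneg (by positivity)]
      exact Real.rpow_le_rpow (norm_nonneg _) (hAm x hx) (by linarith)
    · rw [Set.indicator_of_notMem hx, Set.indicator_of_notMem hx, norm_zero]
  have e1 : ∫ x, ‖g x‖ ^ q = I := by
    rw [hI, ← integral_indicator hA]
    congr 1; ext x
    rw [hgn]
    by_cases hx : x ∈ A
    · rw [Set.indicator_of_mem hx, Set.indicator_of_mem hx, ← Real.rpow_mul (norm_nonneg _), mul_comm, hq]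
    · rw [Set.indicator_of_notMem hx, Set.indicator_of_notMem hx, Real.zero_rpow hq0.ne']
  have e2 : ∫ x, v x * starRingEnd ℂ (g x) = (I : ℂ) := by
    rw [hI, ← integral_indicator hA, ← integral_complex_ofReal]
    congr 1; ext x
    by_cases hx : x ∈ A
    · rw [Set.indicator_of_mem hx, hg, Set.indicator_of_mem hx, map_mul, Complex.conj_ofReal, mul_left_comm, Complex.mul_conj,
        Complex.normSq_eq_norm_sq, ← Complex.ofReal_mul, ← Real.rpow_two, ← Real.rpow_add' (norm_nonneg _) (by linarith)]
      congr 2; ring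
    · rw [Set.indicator_of_notMem hx, hg, Set.indicator_of_notMem hx]; simp
  have t1 : Tendsto (fun k => ∫ x, ‖G k x‖ ^ q) atTop (𝓝 I) := by
    rw [← e1]
    apply tendsto_integral_of_dominated_convergence (A.indicator (fun _ => c ^ q))
    · intro k
      exact ((G k).stronglyMeasurable.norm.measurable.pow_const q).aestronglyMeasurable
    · exact hind _
    · intro k
      filter_upwards with x
      have := hGn k x
      rw [Real.norm_eq_abs, abs_of_nonneg (by positivity)]
      by_cases hx : x ∈ A
      · rw [Set.indicator_of_mem hx] at this ⊢
        exact Real.rpow_le_rpow (norm_nonneg _) this hq0.le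
      · rw [Set.indicator_of_notMem hx] at this ⊢
        rw [le_antisymm this (norm_nonneg _), Real.zero_rpow hq0.ne']
    · filter_upwards with x
      exact (hGt x).norm.rpow_const (Or.inr hq0.le)
  have t2 : Tendsto (fun k => ∫ x, v x * starRingEnd ℂ (G k x)) atTop (𝓝 (I : ℂ)) := by
    rw [← e2]
    apply tendsto_integral_of_dominated_convergence (A.indicator (fun _ => m * c))
    · intro k
      exact (hvm.mul (Complex.continuous_conj.comp_stronglyMeasurable (G k).stronglyMeasurable)).aestronglyMeasurable
    · exact hind _
    · intro k
      filter_upwards with x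
      have := hGn k x
      rw [norm_mul, RCLike.norm_conj]
      by_cases hx : x ∈ A
      · rw [Set.indicator_of_mem hx] at this ⊢
        exact mul_le_mul (hAm x hx) this (norm_nonneg _) hm
      · rw [Set.indicator_of_notMem hx] at this ⊢
        rw [le_antisymm this (norm_nonneg _), mul_zero]
    · filter_upwards with x
      exact ((Complex.continuous_conj.tendsto _).comp (hGt x)).const_mul _
  have key : I ≤ (2 * K) ^ p := by
    rcases hI0.eq_or_lt with h | hIp
    · rw [← h]
      have hK : 0 ≤ K := by
        have := H 0 (by simp) 1 one_pos (by simp [Real.zero_rpow hq0.ne'])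
        simpa using (norm_nonneg _).trans this
      positivity
    set Y := 2 * I ^ (1 / q) with hY
    have hY0 : 0 < Y := by positivity
    have hYq : I < Y ^ q := by
      rw [hY, Real.mul_rpow (by norm_num) (by positivity), ← Real.rpow_mul hI0, one_div_mul_cancel hq0.ne', Real.rpow_one]
      have : (1 : ℝ) < 2 ^ q := Real.one_lt_rpow (by norm_num) hq0
      nlinarith
    have h1 : ∀ᶠ k in atTop, ‖∫ x, v x * starRingEnd ℂ (G k x)‖ ≤ K * Y := by
      filter_upwards [t1.eventually (gt_mem_nhds hYq)] with k hk
      exact H (G k) (hGi k) Y hY0 hk.le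
    have h2 : I ≤ K * Y := by
      have := le_of_tendsto t2.norm h1
      rwa [Complex.norm_real, Real.norm_eq_abs, abs_of_pos hIp] at this
    have h3 : I = I ^ (1 / p) * I ^ (1 / q) := by
      rw [← Real.rpow_add hIp]
      have : 1 / p + 1 / q = 1 := by
        have : p ≠ 0 := by linarith
        field_simp
        linarith
      rw [this, Real.rpow_one]
    have h4 : I ^ (1 / p) ≤ 2 * K := by
      have h5 : 0 < I ^ (1 / q) := by positivity
      refine le_of_mul_le_mul_right ?_ h5
      rw [← h3]
      linarith
    calc I = (I ^ (1 / p)) ^ p := by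
          rw [← Real.rpow_mul hI0, one_div_mul_cancel (by linarith), Real.rpow_one]
      _ ≤ (2 * K) ^ p := Real.rpow_le_rpow (by positivity) h4 (by linarith)
  calc ∫⁻ x in A, ‖v x‖ₑ ^ p = ∫⁻ x in A, ENNReal.ofReal (‖v x‖ ^ p) := by
        congr 1; ext x
        rw [← ENNReal.ofReal_rpow_of_nonneg (norm_nonneg _) (by linarith), ofReal_norm]
    _ = ENNReal.ofReal I := (ofReal_integral_eq_lintegral_ofReal hvp (ae_of_all _ fun x => by positivity)).symm
    _ ≤ _ := ENNReal.ofReal_le_ofReal key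

lemma dual {N : ℕ} {u : Esp N → ℂ} (hu : MemLp u 2 (volume : Measure (Esp N))) {p q K : ℝ} (hp : 2 < p) (hq : q * (p - 1) = p) (hK : 0 ≤ K)
    (H : ∀ g : SimpleFunc (Esp N) ℂ, Integrable g → ∀ Y : ℝ, 0 < Y → ∫ x, ‖g x‖ ^ q ≤ Y ^ q →
      ‖∫ x, u x * starRingEnd ℂ (g x)‖ ≤ K * Y) :
    eLpNorm u (ENNReal.ofReal p) (volume : Measure (Esp N)) ≤ ENNReal.ofReal (2 * K) := by
  set v := hu.1.mk u with hv
  have hvm : StronglyMeasurable v := hu.1.stronglyMeasurable_mk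
  have huv : u =ᵐ[volume] v := hu.1.ae_eq_mk
  have hv2 : MemLp v 2 volume := hu.ae_eq huv
  have H' : ∀ g : SimpleFunc (Esp N) ℂ, Integrable g → ∀ Y : ℝ, 0 < Y → ∫ x, ‖g x‖ ^ q ≤ Y ^ q →
      ‖∫ x, v x * starRingEnd ℂ (g x)‖ ≤ K * Y := by
    intro g hg Y hY h
    have := H g hg Y hY h
    rwa [integral_congr_ae (g := fun x => v x * starRingEnd ℂ (g x))] at this
    filter_upwards [huv] with x hx
    rw [hx]
  rw [eLpNorm_congr_ae huv]
  set A : ℕ → Set (Esp N) := fun n => {x | 1 / ((n : ℝ) + 1) ≤ ‖v x‖ ∧ ‖v x‖ ≤ (n : ℝ) + 1} with hA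
  have hAm : ∀ n, MeasurableSet (A n) := fun n =>
    (measurableSet_le measurable_const hvm.norm.measurable).inter (measurableSet_le hvm.norm.measurable measurable_const)
  have hAf : ∀ n, volume (A n) < ⊤ := by
    intro n
    have h := hv2.meas_ge_lt_top (by norm_num) (by norm_num) (ε := Real.toNNReal (1 / ((n : ℝ) + 1))) (by
      rw [Ne, Real.toNNReal_eq_zero, not_le]; positivity)
    refine lt_of_le_of_lt (measure_mono ?_) h
    intro x hx
    simp only [Set.mem_ofPred_eq]
    rw [Real.toNNReal_le_iff_le_coe, coe_nnnorm]
    exact hx.1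
  have hmono : Monotone A := by
    intro n k hnk x hx
    have : (n : ℝ) ≤ k := by exact_mod_cast hnk
    refine ⟨le_trans ?_ hx.1, hx.2.trans (by linarith)⟩
    gcongr
  have hstep : ∀ n, ∫⁻ x in A n, ‖v x‖ₑ ^ p ≤ ENNReal.ofReal ((2 * K) ^ p) := fun n =>
    dual_step hvm hp hq H' (hAm n) (hAf n) (m := (n : ℝ) + 1) (by positivity) (fun x hx => hx.2)
  have hU : ∫⁻ x, ‖v x‖ₑ ^ p = ∫⁻ x in ⋃ n, A n, ‖v x‖ₑ ^ p := by
    rw [← lintegral_indicator (MeasurableSet.iUnion hAm)]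
    congr 1; ext x
    by_cases hx : x ∈ ⋃ n, A n
    · rw [Set.indicator_of_mem hx]
    · rw [Set.indicator_of_notMem hx]
      have : v x = 0 := by
        by_contra h
        apply hx
        have hpos : 0 < ‖v x‖ := norm_pos_iff.2 h
        obtain ⟨n, hn⟩ := exists_nat_ge (max ‖v x‖ (1 / ‖v x‖))
        refine Set.mem_iUnion.2 ⟨n, ?_, ?_⟩
        · have := (le_max_right _ _).trans hn
          rw [div_le_iff₀ (by positivity)]
          rw [div_le_iff₀ hpos] at this
          linarith
        · have := (le_max_left _ _).trans hn
          linarith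
      rw [this, enorm_zero, ENNReal.zero_rpow_of_pos (by linarith)]
  have hp0 : ENNReal.ofReal p ≠ 0 := by rw [Ne, ENNReal.ofReal_eq_zero, not_le]; linarith
  rw [eLpNorm_eq_lintegral_rpow_enorm_toReal hp0 ENNReal.ofReal_ne_top, ENNReal.toReal_ofReal (by linarith), hU,
    setLIntegral_iUnion_of_directed _ hmono.directed_le]
  calc _ ≤ (ENNReal.ofReal ((2 * K) ^ p)) ^ (1 / p) := by
        apply ENNReal.rpow_le_rpow (iSup_le hstep)
        have : 0 < p := by linarith
        positivity
    _ = ENNReal.ofReal (2 * K) := by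
        rw [ENNReal.ofReal_rpow_of_nonneg (by positivity) (by have : 0 < p := by linarith
                                                              positivity),
          ← Real.rpow_mul (by positivity), mul_one_div_cancel (by linarith), Real.rpow_one]

end part12

section part13

open scoped FourierTransform ENNReal NNReal

lemma hat_memLp {N : ℕ} {s : ℝ} (hs : 0 < s) (U : Hs N s) : MemLp U.hat 2 (volume : Measure (Esp N)) := by
  have hc : Continuous (fun ξ : Esp N => (((1 + ‖ξ‖ ^ 2) ^ (-(s / 2)) : ℝ) : ℂ)) := by
    apply Complex.continuous_ofReal.comp
    apply Continuous.rpow_const (by fun_prop)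
    intro ξ; left; positivity
  have e : U.hat = fun ξ => (((1 + ‖ξ‖ ^ 2) ^ (-(s / 2)) : ℝ) : ℂ) * ((((1 + ‖ξ‖ ^ 2) ^ (s / 2) : ℝ) : ℂ) * U.hat ξ) := by
    ext ξ
    rw [← mul_assoc, ← Complex.ofReal_mul, ← Real.rpow_add (by positivity)]
    simp
  have hm : AEStronglyMeasurable U.hat (volume : Measure (Esp N)) := by
    rw [e]; exact hc.aestronglyMeasurable.mul U.hat_mem.1
  refine U.hat_mem.mono hm (ae_of_all _ fun ξ => ?_)
  rw [norm_mul, Complex.norm_real, Real.norm_eq_abs, abs_of_nonneg (by positivity)]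
  refine le_mul_of_one_le_left (norm_nonneg _) ?_
  exact Real.one_le_rpow (by nlinarith [sq_nonneg ‖ξ‖]) (by positivity)

lemma d_memLp {N : ℕ} {s : ℝ} (hs : 0 < s) (U : Hs N s) :
    MemLp (fun ξ => ((‖ξ‖ ^ s - 1 : ℝ) : ℂ) * U.hat ξ) 2 (volume : Measure (Esp N)) := by
  have hc : Continuous (fun ξ : Esp N => ((‖ξ‖ ^ s - 1 : ℝ) : ℂ)) := by
    apply Complex.continuous_ofReal.comp
    apply Continuous.sub _ continuous_const
    exact Continuous.rpow_const (by fun_prop) (fun ξ => Or.inr hs.le)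
  refine U.hat_mem.mono (hc.aestronglyMeasurable.mul (hat_memLp hs U).1) (ae_of_all _ fun ξ => ?_)
  rw [norm_mul, norm_mul]
  gcongr
  rw [Complex.norm_real, Complex.norm_real, Real.norm_eq_abs, Real.norm_eq_abs]
  have h1 : ‖ξ‖ ^ s ≤ (1 + ‖ξ‖ ^ 2) ^ (s / 2) := by
    have : ‖ξ‖ ^ s = (‖ξ‖ ^ 2) ^ (s / 2) := by
      rw [← Real.rpow_two, ← Real.rpow_mul (norm_nonneg _)]; congr 1; ring
    rw [this]
    exact Real.rpow_le_rpow (by positivity) (by linarith) (by positivity)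
  have h2 : 1 ≤ (1 + ‖ξ‖ ^ 2) ^ (s / 2) := Real.one_le_rpow (by nlinarith [sq_nonneg ‖ξ‖]) (by positivity)
  have h3 : 0 ≤ ‖ξ‖ ^ s := by positivity
  rw [abs_of_nonneg (by positivity : 0 ≤ (1 + ‖ξ‖ ^ 2) ^ (s / 2)), abs_le]
  constructor <;> linarith

lemma hat_norm {N : ℕ} {s : ℝ} (hs : 0 < s) (U : Hs N s) :
    eLpNorm U.hat 2 (volume : Measure (Esp N)) = eLpNorm U.u 2 (volume : Measure (Esp N)) := by
  have h := fourier_toLp_of_spec U.u_mem (hat_memLp hs U) U.fourier_spec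
  have h2 := Lp.norm_fourier_eq (U.u_mem.toLp U.u)
  rw [h, Lp.norm_toLp, Lp.norm_toLp] at h2
  exact (ENNReal.toReal_eq_toReal_iff' (hat_memLp hs U).2.ne U.u_mem.2.ne).1 h2

lemma u_pos {N : ℕ} {s : ℝ} (U : Hs N s) (hU : U.Nontriv) : eLpNorm U.u 2 (volume : Measure (Esp N)) ≠ 0 := by
  intro h
  exact hU ((eLpNorm_eq_zero_iff U.u_mem.1 (by norm_num)).1 h)

lemma d_pos {N : ℕ} {s : ℝ} (hs : 0 < s) (U : Hs N s) (hU : U.Nontriv) : dNorm U ≠ 0 := by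
  intro h
  apply u_pos U hU
  rw [← hat_norm hs U]
  rw [eLpNorm_eq_zero_iff (hat_memLp hs U).1 (by norm_num)]
  have h1 := (eLpNorm_eq_zero_iff (d_memLp hs U).1 (by norm_num)).1 h
  have h2 : ∀ᵐ ξ : Esp N ∂volume, ξ ∉ Metric.sphere (0 : Esp N) 1 :=
    measure_eq_zero_iff_ae_notMem.1 (Measure.addHaar_sphere_of_ne_zero volume 0 one_ne_zero)
  filter_upwards [h1, h2] with ξ h3 h4
  simp only [Pi.zero_apply, mul_eq_zero, Complex.ofReal_eq_zero] at h3 ⊢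
  rcases h3 with h3 | h3
  · exfalso
    apply h4
    rw [mem_sphere_zero_iff_norm]
    have : ‖ξ‖ ^ s = 1 := by linarith
    rcases lt_trichotomy ‖ξ‖ 1 with h5 | h5 | h5
    · exact absurd this (Real.rpow_lt_one (norm_nonneg _) h5 hs).ne
    · exact h5
    · exact absurd this (Real.one_lt_rpow h5 hs).ne'
  · exact h3

lemma integral_sq {N : ℕ} {f : Esp N → ℂ} (hf : MemLp f 2 (volume : Measure (Esp N))) :
    ∫ x, ‖f x‖ ^ 2 = (eLpNorm f 2 (volume : Measure (Esp N))).toReal ^ 2 := by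
  rw [hf.eLpNorm_eq_integral_rpow_norm (by norm_num) (by norm_num), ENNReal.toReal_ofReal (by positivity)]
  simp only [ENNReal.toReal_ofNat, Real.rpow_two]
  rw [← Real.rpow_two, ← Real.rpow_mul (by positivity)]
  norm_num

lemma pair_bound {N : ℕ} {s κ θ q a R : ℝ} (hs : 0 < s) (hθ0 : 0 < θ) (hθ1 : θ < 1) (hq0 : 0 < q) (hq : q * (1 + θ) / 2 = 1)
    (hσ : (N : ℝ) / 2 < s / θ) (ha : a = 2 * (1 - κ)) (ha0 : 0 < a) (ha1 : a ≤ 1) (haN : 2 * (a / θ) ≤ N + 1) (hR : 0 < R) :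
    ∃ M : ℝ, 0 ≤ M ∧ ∀ U : Hs N s, U.Nontriv → dNorm U ≤ ENNReal.ofReal R * eLpNorm U.u 2 (volume : Measure (Esp N)) →
      ∀ g : SimpleFunc (Esp N) ℂ, Integrable g → ∀ Y : ℝ, 0 < Y → ∫ x, ‖g x‖ ^ q ≤ Y ^ q →
      ‖∫ x, U.u x * starRingEnd ℂ (g x)‖ ≤
        (M * ((eLpNorm U.u 2 (volume : Measure (Esp N))).toReal ^ κ * (dNorm U).toReal ^ (1 - κ))) * Y := by
  obtain ⟨C1, hC1, H1⟩ := lowQ (N := N) hθ0 hθ1 hq0 hq ha0 ha1 haN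
  obtain ⟨C2, hC2, H2⟩ := highQ (N := N) hθ0 hθ1 hq0 hq hs hσ
  obtain ⟨C, hC, HW⟩ := weight hs ha1 hR
  refine ⟨C + (C1 + C2) / 2, by positivity, fun U hU hUR g hg Y hY hgY => ?_⟩
  have hhat := hat_memLp hs U
  have hd := d_memLp hs U
  set nu := (eLpNorm U.u 2 (volume : Measure (Esp N))).toReal with hnu
  set d := (dNorm U).toReal with hdd
  have hnu0 : 0 < nu := ENNReal.toReal_pos (u_pos U hU) U.u_mem.2.ne
  have hd0 : 0 < d := ENNReal.toReal_pos (d_pos hs U hU) hd.2.ne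
  have hdR : d ≤ R * nu := by
    have := ENNReal.toReal_mono (ENNReal.mul_ne_top ENNReal.ofReal_ne_top U.u_mem.2.ne) hUR
    rwa [ENNReal.toReal_mul, ENNReal.toReal_ofReal hR.le] at this
  set lam := d / nu with hlam
  have hl0 : 0 < lam := by positivity
  have hlR : lam ≤ R := by rw [hlam, div_le_iff₀ hnu0]; exact hdR
  have hg2 : MemLp g 2 (volume : Measure (Esp N)) :=
    (SimpleFunc.memLp_iff_integrable (by norm_num) (by norm_num)).2 hg
  have hF := (fourier_L1_L2 hg hg2).1
  have iF : Integrable (fun ξ => ‖𝓕 (⇑g) ξ‖ ^ 2) := hF.integrable_norm_pow (by norm_num)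
  have ihat : Integrable (fun ξ => ‖U.hat ξ‖ ^ 2) := hhat.integrable_norm_pow (by norm_num)
  have id : Integrable (fun ξ => ‖((‖ξ‖ ^ s - 1 : ℝ) : ℂ) * U.hat ξ‖ ^ 2) := hd.integrable_norm_pow (by norm_num)
  have s1 : ∫ ξ, ‖U.hat ξ‖ ^ 2 = nu ^ 2 := by rw [integral_sq hhat, hat_norm hs U]
  have s2 : ∫ ξ, ‖((‖ξ‖ ^ s - 1 : ℝ) : ℂ) * U.hat ξ‖ ^ 2 = d ^ 2 := integral_sq hd
  set D := nu ^ κ * d ^ (1 - κ) with hD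
  have hD0 : 0 < D := by positivity
  -- integrability of the weighted terms
  have cl : Continuous (fun ξ : Esp N => wlow a lam ξ) := by
    unfold wlow
    have h1 : Continuous (fun ξ : Esp N => ‖cxi lam ξ‖ ^ (-(1 + a))) := by
      apply Continuous.rpow_const
      · unfold cxi; fun_prop
      · intro ξ; left; exact (hl0.trans_le (cxi_norm_ge ξ)).ne'
    fun_prop
  have ch : Continuous (fun ξ : Esp N => whigh s ξ) := by
    unfold whigh
    apply Continuous.rpow_const (by fun_prop)
    intro ξ; left; positivity
  have il : Integrable (fun ξ => wlow a lam ξ * ‖𝓕 (⇑g) ξ‖ ^ 2) := by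
    refine Integrable.bdd_mul (c := lam * lam ^ (-(1 + a))) iF cl.aestronglyMeasurable (ae_of_all _ fun ξ => ?_)
    unfold wlow
    rw [Real.norm_eq_abs, abs_of_nonneg (by positivity)]
    refine (mul_le_of_le_one_left (by positivity) (gauss_le_one ξ)).trans ?_
    exact mul_le_mul_of_nonneg_left (Real.rpow_le_rpow_of_nonpos hl0 (cxi_norm_ge ξ) (by linarith)) hl0.le
  have ih : Integrable (fun ξ => whigh s ξ * ‖𝓕 (⇑g) ξ‖ ^ 2) := by
    refine Integrable.bdd_mul (c := 1) iF ch.aestronglyMeasurable (ae_of_all _ fun ξ => ?_)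
    unfold whigh
    rw [Real.norm_eq_abs, abs_of_nonneg (by positivity)]
    exact Real.rpow_le_one_of_one_le_of_nonpos (by nlinarith [sq_nonneg ‖ξ‖]) (by linarith)
  have hX : (∫ x, ‖g x‖ ^ q) ^ (2 / q) ≤ Y ^ 2 := by
    calc _ ≤ (Y ^ q) ^ (2 / q) := Real.rpow_le_rpow (by positivity) hgY (by positivity)
      _ = Y ^ 2 := by
        rw [← Real.rpow_mul hY.le, ← Real.rpow_two]; congr 1; field_simp
  have b1 : ∫ ξ, wlow a lam ξ * ‖𝓕 (⇑g) ξ‖ ^ 2 ≤ C1 * Y ^ 2 :=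
    (H1 lam hl0 g hg).trans (by gcongr)
  have b2 : ∫ ξ, whigh s ξ * ‖𝓕 (⇑g) ξ‖ ^ 2 ≤ C2 * Y ^ 2 :=
    (H2 g hg).trans (by gcongr)
  set t := Y / D with ht
  have ht0 : 0 < t := by positivity
  rw [pairing U.u_mem hhat U.fourier_spec hg hg2]
  -- pointwise bound
  have hpt : ∀ ξ, ‖U.hat ξ * starRingEnd ℂ (𝓕 (⇑g) ξ)‖ ≤
      (t * C / 2 * lam ^ a) * ‖U.hat ξ‖ ^ 2 + (t * C / 2 * lam ^ (a - 2)) * ‖((‖ξ‖ ^ s - 1 : ℝ) : ℂ) * U.hat ξ‖ ^ 2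
        + (1 / (2 * t)) * (wlow a lam ξ * ‖𝓕 (⇑g) ξ‖ ^ 2) + (1 / (2 * t)) * (whigh s ξ * ‖𝓕 (⇑g) ξ‖ ^ 2) := by
    intro ξ
    have hw := HW N lam hl0 hlR ξ
    rw [norm_mul, RCLike.norm_conj, norm_mul, Complex.norm_real, mul_pow, Real.norm_eq_abs, sq_abs]
    set V := lam ^ a + lam ^ (a - 2) * (‖ξ‖ ^ s - 1) ^ 2 with hV
    set W := wlow a lam ξ + whigh s ξ with hW
    set x := ‖U.hat ξ‖
    set y := ‖𝓕 (⇑g) ξ‖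
    have hx : 0 ≤ x := norm_nonneg _
    have hy : 0 ≤ y := norm_nonneg _
    have hV0 : 0 < V := by rw [hV]; positivity
    have hW0 : 0 ≤ W := by
      rw [hW]; unfold wlow whigh; positivity
    have hsq : x * y ≤ t * C / 2 * V * x ^ 2 + 1 / (2 * t) * (W * y ^ 2) := by
      have hA : 0 < C * V := by positivity
      set E := C * V with hE
      have hWE : 1 / E ≤ W := by rw [div_le_iff₀ hA]; linarith
      have h1 : x * y ≤ t * E / 2 * x ^ 2 + 1 / (2 * t) * (1 / E * y ^ 2) := by
        have h2 : t * E / 2 * x ^ 2 + 1 / (2 * t) * (1 / E * y ^ 2) - x * y = (t * E * x - y) ^ 2 / (2 * t * E) := by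
          field_simp; ring
        have h3 : 0 ≤ (t * E * x - y) ^ 2 / (2 * t * E) := by positivity
        linarith
      calc x * y ≤ _ := h1
        _ ≤ t * E / 2 * x ^ 2 + 1 / (2 * t) * (W * y ^ 2) := by gcongr
        _ = _ := by rw [hE]; ring
    refine hsq.trans (le_of_eq ?_)
    rw [hV, hW]; ring
  calc ‖∫ ξ, U.hat ξ * starRingEnd ℂ (𝓕 (⇑g) ξ)‖ ≤ ∫ ξ, ‖U.hat ξ * starRingEnd ℂ (𝓕 (⇑g) ξ)‖ := norm_integral_le_integral_norm _
    _ ≤ ∫ ξ, ((t * C / 2 * lam ^ a) * ‖U.hat ξ‖ ^ 2 + (t * C / 2 * lam ^ (a - 2)) * ‖((‖ξ‖ ^ s - 1 : ℝ) : ℂ) * U.hat ξ‖ ^ 2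
        + (1 / (2 * t)) * (wlow a lam ξ * ‖𝓕 (⇑g) ξ‖ ^ 2) + (1 / (2 * t)) * (whigh s ξ * ‖𝓕 (⇑g) ξ‖ ^ 2)) := by
        apply integral_mono_of_nonneg (ae_of_all _ fun ξ => norm_nonneg _)
        · exact (((ihat.const_mul _).add (id.const_mul _)).add (il.const_mul _)).add (ih.const_mul _)
        · exact ae_of_all _ hpt
    _ = (t * C / 2 * lam ^ a) * nu ^ 2 + (t * C / 2 * lam ^ (a - 2)) * d ^ 2 + (1 / (2 * t)) * (∫ ξ, wlow a lam ξ * ‖𝓕 (⇑g) ξ‖ ^ 2)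
          + (1 / (2 * t)) * (∫ ξ, whigh s ξ * ‖𝓕 (⇑g) ξ‖ ^ 2) := by
        rw [integral_add, integral_add, integral_add, integral_const_mul, integral_const_mul, integral_const_mul, integral_const_mul, s1, s2]
        · exact ihat.const_mul _
        · exact id.const_mul _
        · exact (ihat.const_mul _).add (id.const_mul _)
        · exact il.const_mul _
        · exact ((ihat.const_mul _).add (id.const_mul _)).add (il.const_mul _)
        · exact ih.const_mul _
    _ ≤ (t * C / 2 * lam ^ a) * nu ^ 2 + (t * C / 2 * lam ^ (a - 2)) * d ^ 2 + (1 / (2 * t)) * (C1 * Y ^ 2)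
          + (1 / (2 * t)) * (C2 * Y ^ 2) := by gcongr
    _ = (C + (C1 + C2) / 2) * D * Y := by
        have k1 : lam ^ a * nu ^ 2 = D ^ 2 := by
          rw [hlam, hD, mul_pow, Real.div_rpow hd0.le hnu0.le, ← Real.rpow_natCast (nu ^ κ), ← Real.rpow_natCast (d ^ (1 - κ)),
            ← Real.rpow_mul hnu0.le, ← Real.rpow_mul hd0.le, ← Real.rpow_natCast nu, div_mul_eq_mul_div, mul_div_assoc,
            ← Real.rpow_sub hnu0, mul_comm]
          congr 2 <;> rw [ha] <;> push_cast <;> ring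
        have k2 : lam ^ (a - 2) * d ^ 2 = D ^ 2 := by
          rw [← k1, Real.rpow_sub hl0, Real.rpow_two, hlam]; field_simp
        have k3 : (t * C / 2 * lam ^ a) * nu ^ 2 = t * C / 2 * D ^ 2 := by rw [mul_assoc, k1]
        have k4 : (t * C / 2 * lam ^ (a - 2)) * d ^ 2 = t * C / 2 * D ^ 2 := by rw [mul_assoc, k2]
        rw [k3, k4, ht]
        field_simp
        ring

end part13

/-- If `1/p > 1/2 - s/N`, `κ ≥ 1/2` and
`1 - κ ≤ ((N+1)/2)(1/2 - 1/p)`, then for every `R > 0` the supremum of `Q_κ` over the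
nonzero `u ∈ H^s(ℝ^N)` satisfying `‖(|D|^s - 1)u‖_{L²} ≤ R ‖u‖_{L²}` is finite. -/
theorem stmt3 (N : ℕ) (hN : 1 ≤ N) (s p κ : ℝ) (hs : 0 < s) (hp : 2 < p)
    (hκ0 : 0 < κ) (hκ1 : κ < 1)
    (h1 : 1 / 2 - s / (N : ℝ) < 1 / p) (h2 : 1 / 2 ≤ κ)
    (h3 : 1 - κ ≤ (((N : ℝ) + 1) / 2) * (1 / 2 - 1 / p)) :
    ∀ R : ℝ, 0 < R →
      (⨆ (U : Hs N s) (_ : U.Nontriv ∧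
          dNorm U ≤ ENNReal.ofReal R * eLpNorm U.u 2 (volume : Measure (Esp N))),
        Qquot p κ U) < ⊤ := by
  intro R hR
  have hp0 : 0 < p := by linarith
  have hNpos : (0 : ℝ) < N := by exact_mod_cast hN
  set θ := 1 - 2 / p with hθ
  set q := p / (p - 1) with hq
  have hp1 : 0 < p - 1 := by linarith
  have hθ0 : 0 < θ := by
    have : 2 / p < 1 := by rw [div_lt_one hp0]; exact hp
    rw [hθ]; linarith
  have hθ1 : θ < 1 := by
    have : 0 < 2 / p := by positivity
    rw [hθ]; linarith
  have hq0 : 0 < q := by positivity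
  have hqθ : q * (1 + θ) / 2 = 1 := by rw [hq, hθ]; field_simp; ring
  have hqp : q * (p - 1) = p := by rw [hq]; field_simp
  have hpθ : 1 / 2 - 1 / p = θ / 2 := by rw [hθ]; ring
  have hσ : (N : ℝ) / 2 < s / θ := by
    have h4 : θ / 2 < s / N := by rw [← hpθ]; linarith
    rw [lt_div_iff₀ hNpos] at h4
    rw [lt_div_iff₀ hθ0]
    linarith
  have haN : 2 * ((2 * (1 - κ)) / θ) ≤ N + 1 := by
    rw [hpθ] at h3
    rw [mul_div_assoc', div_le_iff₀ hθ0]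
    linarith
  obtain ⟨M, hM, H⟩ := pair_bound (κ := κ) hs hθ0 hθ1 hq0 hqθ hσ rfl (by linarith) (by linarith) haN hR
  refine lt_of_le_of_lt (iSup₂_le (a := ENNReal.ofReal (2 * M)) fun U hU => ?_) ENNReal.ofReal_lt_top
  have hB := dual U.u_mem hp hqp (by positivity) (H U hU.1 hU.2)
  unfold Qquot
  apply ENNReal.div_le_of_le_mul
  refine hB.trans (le_of_eq ?_)
  rw [← mul_assoc, ENNReal.ofReal_mul (by positivity)]
  congr 1
  rw [ENNReal.ofReal_mul (by positivity)]
  have hd := (d_memLp hs U).2.ne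
  rw [← ENNReal.ofReal_rpow_of_nonneg ENNReal.toReal_nonneg hκ0.le, ← ENNReal.ofReal_rpow_of_nonneg ENNReal.toReal_nonneg (by linarith),
    ENNReal.ofReal_toReal U.u_mem.2.ne, ENNReal.ofReal_toReal (a := dNorm U) hd]

end
end

section
/- Let N ≥ 1 and σ > 0 with Nσ > 4. Then E_min(m) = -∞ for every m > 0. -/
open MeasureTheory Filter Topology

noncomputable section

/-- Smooth compactly supported test functions. -/
def TestFun {N : ℕ} (φ : Esp N → ℂ) : Prop :=
  ContDiff ℝ (⊤ : ℕ∞) φ ∧ HasCompactSupport φ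

/-- Partial derivative in the `i`-th coordinate direction. -/
def pderivC {N : ℕ} (i : Fin N) (φ : Esp N → ℂ) : Esp N → ℂ :=
  fun x => fderiv ℝ φ x (EuclideanSpace.single i (1 : ℝ))

/-- The Laplacian of a (smooth) function. -/
def lapC {N : ℕ} (φ : Esp N → ℂ) : Esp N → ℂ :=
  fun x => ∑ i, pderivC i (pderivC i φ) x

/-- `v` is the weak `i`-th partial derivative of `u`. -/
def IsWeakPDeriv {N : ℕ} (u : Esp N → ℂ) (i : Fin N) (v : Esp N → ℂ) : Prop :=
  ∀ φ : Esp N → ℂ, TestFun φ → ∫ x, u x * pderivC i φ x = - ∫ x, v x * φ x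

/-- `v` is the weak Laplacian of `u`. -/
def IsWeakLap {N : ℕ} (u v : Esp N → ℂ) : Prop :=
  ∀ φ : Esp N → ℂ, TestFun φ → ∫ x, u x * lapC φ x = ∫ x, v x * φ x

/-- An element of the Sobolev space `H²(ℝ^N, ℂ)`: an `L²` function together with its
weak partial derivatives and its weak Laplacian, all in `L²`. -/
structure H2 (N : ℕ) where
  u : Esp N → ℂ
  grad : Fin N → Esp N → ℂ
  lapl : Esp N → ℂ
  u_mem : MemLp u 2 (volume : Measure (Esp N))
  grad_mem : ∀ i, MemLp (grad i) 2 (volume : Measure (Esp N))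
  lapl_mem : MemLp lapl 2 (volume : Measure (Esp N))
  grad_spec : ∀ i, IsWeakPDeriv u i (grad i)
  lapl_spec : IsWeakLap u lapl

namespace H2

variable {N : ℕ}

/-- `∫ |u|²`. -/
def massSq (U : H2 N) : ℝ := ∫ x, ‖U.u x‖ ^ 2

/-- `∫ |∇u|²`. -/
def gradSq (U : H2 N) : ℝ := ∑ i, ∫ x, ‖U.grad i x‖ ^ 2

/-- `∫ |Δu|²`. -/
def lapSq (U : H2 N) : ℝ := ∫ x, ‖U.lapl x‖ ^ 2

/-- `∫ |u|^{2σ+2}`. -/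
def pPow (σ : ℝ) (U : H2 N) : ℝ := ∫ x, ‖U.u x‖ ^ (2 * σ + 2)

/-- The energy `E(u) = ∫|Δu|² - 2∫|∇u|² - (1/(σ+1))∫|u|^{2σ+2}`. -/
def energy (σ : ℝ) (U : H2 N) : ℝ :=
  U.lapSq - 2 * U.gradSq - (1 / (σ + 1)) * U.pPow σ

/-- The square of the `H²` norm. -/
def h2NormSq (U : H2 N) : ℝ := U.massSq + U.gradSq + U.lapSq

/-- `u` does not vanish almost everywhere. -/
def Nontriv (U : H2 N) : Prop := ¬ (U.u =ᵐ[(volume : Measure (Esp N))] 0)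

end H2

/-- `E_min(m) = inf {E(u) : u ∈ H², ∫|u|² = m}`, with values in `EReal`. -/
def EminE (N : ℕ) (σ m : ℝ) : EReal :=
  ⨅ (U : H2 N) (_ : U.massSq = m), ((U.energy σ : ℝ) : EReal)

/-- The `L^p` norm (as a real number) of a function on `ℝ^N`. -/
def rLp {N : ℕ} (p : ℝ) (f : Esp N → ℂ) : ℝ :=
  (eLpNorm f (ENNReal.ofReal p) (volume : Measure (Esp N))).toReal


/-- The best constant `B(N,σ)` in the Gagliardo–Nirenberg–Sobolev inequality
`‖u‖_{L^{2σ+2}}^{2σ+2} ≤ B ‖Δu‖_{L²}^{Nσ/2} ‖u‖_{L²}^{2+2σ-Nσ/2}`. -/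
def GNconst (N : ℕ) (σ : ℝ) : ℝ :=
  sSup {r : ℝ | ∃ U : H2 N, U.Nontriv ∧
    r = U.pPow σ /
      (rLp 2 U.lapl ^ ((N : ℝ) * σ / 2) * rLp 2 U.u ^ (2 + 2 * σ - (N : ℝ) * σ / 2))}

/-- `k* = (σ+1)^{1/σ} B(N,σ)^{-1/σ}`. -/
def kstar (N : ℕ) (σ : ℝ) : ℝ := (σ + 1) ^ (1 / σ) * GNconst N σ ^ (-(1 / σ))

/-- Strong `H²` convergence of `v k (· + xs k)` to `U`. -/
def H2TendstoTrans {N : ℕ} (v : ℕ → H2 N) (xs : ℕ → Esp N) (U : H2 N) : Prop :=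
  Tendsto (fun k => eLpNorm (fun x => (v k).u (x + xs k) - U.u x) 2
      (volume : Measure (Esp N))) atTop (nhds 0) ∧
  (∀ i, Tendsto (fun k => eLpNorm (fun x => (v k).grad i (x + xs k) - U.grad i x) 2
      (volume : Measure (Esp N))) atTop (nhds 0)) ∧
  Tendsto (fun k => eLpNorm (fun x => (v k).lapl (x + xs k) - U.lapl x) 2
      (volume : Measure (Esp N))) atTop (nhds 0)

/-- `u` is a weak (`H^{-2}`) solution of `Δ²u + 2Δu + (1+c)u - |u|^{2σ}u = 0`. -/
def SolvesSW {N : ℕ} (σ c : ℝ) (U : H2 N) : Prop :=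
  ∀ φ : Esp N → ℂ, TestFun φ →
    (∫ x, U.lapl x * lapC φ x) + 2 * (∫ x, U.lapl x * φ x) +
        ((1 + c : ℝ) : ℂ) * (∫ x, U.u x * φ x) -
        (∫ x, ((‖U.u x‖ ^ (2 * σ) : ℝ) : ℂ) * U.u x * φ x) = 0

/-- `T_c(u) = ∫|Δu|² - 2∫|∇u|² + (1+c)∫|u|²`. -/
def Tfun {N : ℕ} (c : ℝ) (U : H2 N) : ℝ := U.lapSq - 2 * U.gradSq + (1 + c) * U.massSq

/-- `t(c) = inf {T_c(u) : ∫|u|^{2σ+2} = 1}`. -/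
def tmin (N : ℕ) (σ c : ℝ) : ℝ := sInf {r : ℝ | ∃ U : H2 N, U.pPow σ = 1 ∧ r = Tfun c U}

/-- The action `S_c(u) = E(u) + (1+c)‖u‖_{L²}² = T_c(u) - (1/(σ+1))∫|u|^{2σ+2}`. -/
def action {N : ℕ} (σ c : ℝ) (U : H2 N) : ℝ := U.energy σ + (1 + c) * U.massSq

theorem TestFun.pderiv {N : ℕ} {f : Esp N → ℂ} (hf : TestFun f) (i : Fin N) :
    TestFun (pderivC i f) := by
  refine ⟨?_, hf.2.fderiv_apply (𝕜 := ℝ) _⟩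
  have h : ContDiff ℝ (⊤ : ℕ∞) (fderiv ℝ f) := hf.1.fderiv_right (by simp)
  exact h.clm_apply contDiff_const

theorem TestFun.cont {N : ℕ} {f : Esp N → ℂ} (hf : TestFun f) : Continuous f :=
  hf.1.continuous

theorem TestFun.diff {N : ℕ} {f : Esp N → ℂ} (hf : TestFun f) : Differentiable ℝ f :=
  hf.1.differentiable (by simp)

theorem TestFun.memLp {N : ℕ} {f : Esp N → ℂ} (hf : TestFun f) :
    MemLp f 2 (volume : Measure (Esp N)) :=
  hf.cont.memLp_of_hasCompactSupport hf.2

theorem TestFun.integrable_mul {N : ℕ} {f g : Esp N → ℂ} (hf : TestFun f) (hg : TestFun g) :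
    Integrable (fun x => f x * g x) (volume : Measure (Esp N)) :=
  (hf.cont.mul hg.cont).integrable_of_hasCompactSupport (hf.2.mul_right)

theorem TestFun.weak {N : ℕ} {f : Esp N → ℂ} (hf : TestFun f) (i : Fin N) :
    IsWeakPDeriv f i (pderivC i f) := by
  intro φ hφ
  exact integral_mul_fderiv_eq_neg_fderiv_mul_of_integrable
    ((hf.pderiv i).integrable_mul hφ) (hf.integrable_mul (hφ.pderiv i)) (hf.integrable_mul hφ)
    (fun x _ => hf.diff x) (fun x _ => hφ.diff x)

theorem TestFun.weakLap {N : ℕ} {f : Esp N → ℂ} (hf : TestFun f) :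
    IsWeakLap f (lapC f) := by
  intro φ hφ
  simp only [lapC, Finset.mul_sum, Finset.sum_mul]
  rw [integral_finsetSum _ (fun i _ => hf.integrable_mul ((hφ.pderiv i).pderiv i)),
    integral_finsetSum _ (fun i _ => ((hf.pderiv i).pderiv i).integrable_mul hφ)]
  refine Finset.sum_congr rfl fun i _ => ?_
  rw [hf.weak i _ (hφ.pderiv i), (hf.pderiv i).weak i _ hφ, neg_neg]

/-- A test function as an element of `H²`. -/
def TestFun.toH2 {N : ℕ} {f : Esp N → ℂ} (hf : TestFun f) : H2 N where
  u := f
  grad i := pderivC i f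
  lapl := lapC f
  u_mem := hf.memLp
  grad_mem i := (hf.pderiv i).memLp
  lapl_mem := memLp_finsetSum _ (fun i _ => ((hf.pderiv i).pderiv i).memLp)
  grad_spec := hf.weak
  lapl_spec := hf.weakLap

theorem pderivC_scale {N : ℕ} {f : Esp N → ℂ} (hf : TestFun f) (i : Fin N) (c : ℂ) (t : ℝ) :
    pderivC i (fun x => c * f (t • x)) = fun x => (c * t) * pderivC i f (t • x) := by
  funext x
  unfold pderivC
  rw [fderiv_const_mul, fderiv_comp_smul]
  · simp [mul_assoc]
  · exact (hf.diff.comp (differentiable_id.const_smul t)) x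

theorem lapC_scale {N : ℕ} {f : Esp N → ℂ} (hf : TestFun f) (c : ℂ) (t : ℝ) :
    lapC (fun x => c * f (t • x)) = fun x => (c * t * t) * lapC f (t • x) := by
  funext x
  unfold lapC
  rw [Finset.mul_sum]
  refine Finset.sum_congr rfl fun i _ => ?_
  rw [pderivC_scale hf, pderivC_scale (hf.pderiv i)]

theorem TestFun.scale {N : ℕ} {f : Esp N → ℂ} (hf : TestFun f) (c : ℂ) {t : ℝ} (ht : t ≠ 0) :
    TestFun (fun x => c * f (t • x)) := by
  refine ⟨contDiff_const.mul (hf.1.comp (contDiff_id.const_smul t)), ?_⟩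
  exact (hf.2.comp_smul ht).mul_left

theorem exists_bump (N : ℕ) (σ : ℝ) (hσ : 0 < σ) : ∃ f : Esp N → ℂ, TestFun f ∧
    0 < ∫ x, ‖f x‖ ^ 2 ∧ 0 < ∫ x, ‖f x‖ ^ (2 * σ + 2) := by
  let b : ContDiffBump (0 : Esp N) := ⟨1, 2, by norm_num, by norm_num⟩
  have hT : TestFun (fun x => ((b x : ℝ) : ℂ)) := by
    refine ⟨Complex.ofRealCLM.contDiff.comp b.contDiff, ?_⟩
    exact b.hasCompactSupport.comp_left (g := fun r : ℝ => (r : ℂ)) (by simp)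
  have h1 : b 0 = 1 := b.one_of_mem_closedBall (by simp [b])
  refine ⟨_, hT, ?_, ?_⟩
  · refine Continuous.integral_pos_of_hasCompactSupport_nonneg_nonzero (x := 0)
      (hT.cont.norm.pow 2) ?_ (fun x => by positivity) (by simp [h1])
    exact hT.2.comp_left (g := fun z : ℂ => ‖z‖ ^ 2) (by simp)
  · refine Continuous.integral_pos_of_hasCompactSupport_nonneg_nonzero (x := 0)
      (hT.cont.norm.rpow_const (fun x => Or.inr (by positivity))) ?_
      (fun x => by positivity) (by simp [h1])
    exact hT.2.comp_left (g := fun z : ℂ => ‖z‖ ^ (2 * σ + 2))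
      (by simp only [norm_zero]; exact Real.zero_rpow (by positivity))

theorem integral_scale {N : ℕ} (F : Esp N → ℝ) (C : ℝ) {s : ℝ} (hs : 0 < s) :
    ∫ x, C * F ((s ^ 2) • x) = C * ((s ^ N) ^ 2)⁻¹ * ∫ x, F x := by
  rw [integral_const_mul, Measure.integral_comp_smul]
  rw [finrank_euclideanSpace_fin, abs_of_pos (by positivity), smul_eq_mul, ← pow_mul, ← pow_mul,
    mul_comm 2 N, mul_assoc]

theorem limit_aux (A B p K : ℝ) (hB : 0 < B) (hp : 8 < p) :
    ∃ s : ℝ, 0 < s ∧ A * s ^ 8 - B * s ^ p < K := by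
  have h1 : Tendsto (fun s : ℝ => B * s ^ (p - 8) - A) atTop atTop :=
    tendsto_atTop_add_const_right _ _
      ((tendsto_rpow_atTop (by linarith)).const_mul_atTop hB)
  have h2 : Tendsto (fun s : ℝ => s ^ 8 * (B * s ^ (p - 8) - A)) atTop atTop :=
    (tendsto_pow_atTop (by norm_num)).atTop_mul_atTop₀ h1
  obtain ⟨s, hs, hs0⟩ := ((h2.eventually_gt_atTop (-K)).and (eventually_gt_atTop 0)).exists
  refine ⟨s, hs0, ?_⟩
  have : s ^ p = s ^ 8 * s ^ (p - 8) := by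
    rw [← Real.rpow_natCast s 8, ← Real.rpow_add hs0]; congr 1; push_cast; ring
  rw [this]
  nlinarith

/-- If `Nσ > 4` then `E_min(m) = -∞` for every `m > 0`. -/
theorem stmt4 (N : ℕ) (σ : ℝ) (hN : 1 ≤ N) (hσ : 0 < σ) (hcrit : 4 < (N : ℝ) * σ) :
    ∀ m : ℝ, 0 < m → EminE N σ m = ⊥ := by
  intro m hm
  obtain ⟨f, hf, hM, hP⟩ := exists_bump N σ hσ
  set M := ∫ x, ‖f x‖ ^ 2 with hMdef
  set P := ∫ x, ‖f x‖ ^ (2 * σ + 2) with hPdef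
  set L := ∫ x, ‖lapC f x‖ ^ 2 with hLdef
  set a : ℝ := Real.sqrt (m / M) with ha
  have hapos : 0 < a := Real.sqrt_pos.2 (by positivity)
  have ha2 : a ^ 2 = m / M := Real.sq_sqrt (by positivity)
  rw [EReal.eq_bot_iff_forall_lt]
  intro K
  obtain ⟨s, hs, hK⟩ := limit_aux (a ^ 2 * L) (1 / (σ + 1) * (a ^ (2 * σ + 2) * P))
    (2 * (N * σ)) K (by positivity) (by linarith)
  have hs2 : s ^ 2 ≠ 0 := by positivity
  have hT := hf.scale (((a * s ^ N : ℝ)) : ℂ) hs2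
  have hc : 0 < a * s ^ N := by positivity
  have hsN : (s ^ N) ^ 2 ≠ 0 := by positivity
  have hmass : hT.toH2.massSq = m := by
    have : hT.toH2.massSq = ∫ x, (a * s ^ N) ^ 2 * (fun y => ‖f y‖ ^ 2) (s ^ 2 • x) := by
      refine integral_congr_ae (ae_of_all _ fun x => ?_)
      simp only [TestFun.toH2]
      rw [norm_mul, Complex.norm_real, Real.norm_of_nonneg hc.le, mul_pow]
    refine (this.trans (integral_scale (fun y => ‖f y‖ ^ 2) _ hs)).trans ?_
    rw [← hMdef, mul_pow, mul_assoc (a ^ 2), mul_inv_cancel₀ hsN, ha2]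
    field_simp
  have hlap : hT.toH2.lapSq = a ^ 2 * L * s ^ 8 := by
    have : hT.toH2.lapSq = ∫ x, (a * s ^ N * s ^ 2 * s ^ 2) ^ 2 *
        (fun y => ‖lapC f y‖ ^ 2) (s ^ 2 • x) := by
      refine integral_congr_ae (ae_of_all _ fun x => ?_)
      simp only [TestFun.toH2]
      rw [lapC_scale hf]
      simp only [← Complex.ofReal_mul]
      rw [norm_mul, Complex.norm_real, Real.norm_of_nonneg (by positivity), mul_pow]
    refine (this.trans (integral_scale (fun y => ‖lapC f y‖ ^ 2) _ hs)).trans ?_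
    rw [← hLdef]
    field_simp
  have hpow : hT.toH2.pPow σ = a ^ (2 * σ + 2) * P * s ^ (2 * (N * σ)) := by
    have : hT.toH2.pPow σ = ∫ x, (a * s ^ N) ^ (2 * σ + 2) *
        (fun y => ‖f y‖ ^ (2 * σ + 2)) (s ^ 2 • x) := by
      refine integral_congr_ae (ae_of_all _ fun x => ?_)
      simp only [TestFun.toH2]
      rw [norm_mul, Complex.norm_real, Real.norm_of_nonneg hc.le,
        Real.mul_rpow hc.le (norm_nonneg _)]
    have e : (s ^ N) ^ (2 * σ + 2) = s ^ (2 * (N * σ)) * (s ^ N) ^ 2 := by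
      rw [Real.rpow_add (by positivity), ← Real.rpow_natCast s N, ← Real.rpow_mul hs.le]
      congr 1
      · congr 1; ring
      · norm_num
    refine (this.trans (integral_scale (fun y => ‖f y‖ ^ (2 * σ + 2)) _ hs)).trans ?_
    rw [← hPdef, Real.mul_rpow hapos.le (by positivity), e]
    field_simp
  have hgrad : 0 ≤ hT.toH2.gradSq :=
    Finset.sum_nonneg fun i _ => integral_nonneg fun x => by positivity
  refine lt_of_le_of_lt (iInf₂_le hT.toH2 hmass) ?_
  rw [EReal.coe_lt_coe_iff]
  unfold H2.energy
  rw [hlap, hpow]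
  linarith


end
end
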